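/- arXiv:1101.2833 — 2 statements merged into one kernel-verified Lean document; each statement's English description precedes it below -/
import Mathlib

section
/- Let n ≥ 1, let Ω ⊂ ℝⁿ be a domain (bounded connected open set), let F ∈ C⁰(Ω × ℝ × ℝⁿ × S^{n×n}) be degenerate elliptic, let E ⊂ Ω be a smooth closed embedded submanifold of dimension k with 0 ≤ k ≤ n − 1, and let f ∈ USC(Ω). Assume u ∈ LSC(Ω) with inf_Ω u > −∞ is lowerconical on E and satisfies F(x, u, ∇u, ∇²u) ≤ f(x) in Ω ∖ E in the viscosity sense. Then F(x, u, ∇u, ∇²u) ≤ f(x) in all of Ω in the viscosity sense. -/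
open Set Metric

noncomputable section

/-- ℝⁿ, realized as Euclidean space on `Fin n`. -/
abbrev En (n : ℕ) := EuclideanSpace ℝ (Fin n)

/-- The Hessian matrix `∇²φ(x)` of a real-valued function on ℝⁿ. -/
noncomputable def hess {n : ℕ} (φ : En n → ℝ) (x : En n) : Matrix (Fin n) (Fin n) ℝ :=
  Matrix.of fun i j =>
    iteratedFDeriv ℝ 2 φ x ![EuclideanSpace.single i 1, EuclideanSpace.single j 1]

/-- `u` satisfies `F(x, u, ∇u, ∇²u) ≤ f(x)` in the open set `O` in the viscosity sense:
for every test function `φ ∈ C²(O)` and every `x₀ ∈ O` at which `u - φ` attains a local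
minimum with `u x₀ = φ x₀`, one has `F(x₀, φ(x₀), ∇φ(x₀), ∇²φ(x₀)) ≤ f(x₀)`. -/
def IsViscositySupersolution {n : ℕ}
    (F : En n → ℝ → En n → Matrix (Fin n) (Fin n) ℝ → ℝ)
    (f : En n → ℝ) (O : Set (En n)) (u : En n → ℝ) : Prop :=
  ∀ φ : En n → ℝ, ContDiffOn ℝ 2 φ O → ∀ x₀ ∈ O, u x₀ = φ x₀ →
    IsLocalMinOn (fun x => u x - φ x) O x₀ →
    F x₀ (φ x₀) (gradient φ x₀) (hess φ x₀) ≤ f x₀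

/-- `u` is lowerconical on the subset `E` of `Ω`: for every `η ∈ C^∞(Ω)`, every `xb ∈ E`
and every `ε > 0`, `inf_{x ∈ Ω} ((u+η)(x) - (u+η)(xb) - ε · dist(x, E)) < 0`. -/
def LowerConicalOn {n : ℕ} (Ω : Set (En n)) (u : En n → ℝ) (E : Set (En n)) : Prop :=
  ∀ η : En n → ℝ, ContDiffOn ℝ (⊤ : ℕ∞) η Ω → ∀ xb ∈ E, ∀ ε > 0,
    ∃ x ∈ Ω, (u x + η x) - (u xb + η xb) - ε * Metric.infDist x E < 0

/-- `F` is degenerate elliptic: `F(x,s,p,M+N) ≥ F(x,s,p,M)` for all arguments and all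
positive definite symmetric `N`. -/
def DegenerateElliptic {n : ℕ} (Ω : Set (En n))
    (F : En n → ℝ → En n → Matrix (Fin n) (Fin n) ℝ → ℝ) : Prop :=
  ∀ x ∈ Ω, ∀ (s : ℝ) (p : En n) (M N : Matrix (Fin n) (Fin n) ℝ),
    N.PosDef → F x s p M ≤ F x s p (M + N)

/-- `E` is a smooth (C^∞) closed (compact, boundaryless) embedded `k`-dimensional
submanifold of ℝⁿ: `E` is compact and near each of its points there is a smooth chart
straightening `E` onto the coordinate subspace `{z : z_i = 0 for i ≥ k}`. -/
def IsSmoothClosedSubmanifold {n : ℕ} (k : ℕ) (E : Set (En n)) : Prop :=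
  IsCompact E ∧
  ∀ x ∈ E, ∃ (U V : Set (En n)) (φ ψ : En n → En n),
    IsOpen U ∧ IsOpen V ∧ x ∈ U ∧
    ContDiffOn ℝ (⊤ : ℕ∞) φ U ∧ ContDiffOn ℝ (⊤ : ℕ∞) ψ V ∧
    Set.MapsTo φ U V ∧ Set.MapsTo ψ V U ∧
    (∀ y ∈ U, ψ (φ y) = y) ∧ (∀ z ∈ V, φ (ψ z) = z) ∧
    φ '' (E ∩ U) = V ∩ {z : En n | ∀ i : Fin n, k ≤ (i : ℕ) → z i = 0}

/-!
Let `φ` touch `u` from below at `x₀ ∈ E`. Its second-order Taylor polynomial, lowered by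
`δ‖x - x₀‖² + K‖x - x₀‖⁴`, is a smooth function `p` which lies strictly below `u` on all of `Ω`
except at `x₀`, where it has the value and gradient of `φ` and almost its Hessian.

Near `x₀`, straightening `E` gives a smooth map `H` vanishing on `E` with `dist(x, E) ≤ C‖H x‖`.
Lowerconicality with `η = -p` produces points near `x₀` at which `u < p + ε‖H‖`. Hence the minimum
of `u - p - ε‖H‖` over a small ball is negative, and it is attained in the interior, since the
quadratic gap between `u` and `p` wins on the sphere, and off `E`, since `u ≥ p` and `H = 0` on `E`.
At that minimum point `y` a functional `ℓ` of norm at most `ε` that norms `H y` replaces the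
nonsmooth cone: `p + ℓ ∘ H + c` touches `u` from below at `y ∉ E`. The inequality holds there, and
letting `ε → 0` and then `δ → 0` transfers it to `φ` at `x₀`.
-/

open Filter Topology Asymptotics
open scoped ContDiff

section Calculus

variable {V W : Type*} [NormedAddCommGroup V] [NormedSpace ℝ V]
  [NormedAddCommGroup W] [NormedSpace ℝ W]

theorem exists_contDiff_eventuallyEq [HasContDiffBump V] {m : ℕ} {g : V → W} {x : V}
    (hg : ContDiffAt ℝ m g x) : ∃ h : V → W, ContDiff ℝ m h ∧ h =ᶠ[𝓝 x] g := by
  obtain ⟨R, hR, hgR⟩ := nhds_basis_closedBall.eventually_iff.1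
    (hg.eventually (by simp))
  let χ : ContDiffBump x := ⟨R / 2, R, half_pos hR, half_lt_self hR⟩
  refine ⟨fun y => χ y • g y, contDiff_iff_contDiffAt.2 fun y => ?_, ?_⟩
  · by_cases hy : y ∈ closedBall x R
    · exact χ.contDiffAt.smul (hgR hy)
    · have hχ : χ =ᶠ[𝓝 y] 0 := notMem_tsupport_iff_eventuallyEq.1 (by rwa [χ.tsupport_eq])
      refine (contDiffAt_const (c := (0 : W))).congr_of_eventuallyEq ?_
      filter_upwards [hχ] with z hz
      rw [hz, Pi.zero_apply, zero_smul]
  · filter_upwards [χ.eventuallyEq_one] with y hy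
    rw [hy, Pi.one_apply, one_smul]

/-- The second-order Taylor polynomial of `φ` at `x₀`. -/
def taylorTwo (φ : V → W) (x₀ x : V) : W :=
  φ x₀ + fderiv ℝ φ x₀ (x - x₀) + (1 / 2 : ℝ) • fderiv ℝ (fderiv ℝ φ) x₀ (x - x₀) (x - x₀)

theorem contDiff_taylorTwo (φ : V → W) (x₀ : V) {m : WithTop ℕ∞} :
    ContDiff ℝ m (taylorTwo φ x₀) := by
  unfold taylorTwo
  fun_prop

variable {φ : V → W} {x₀ : V}

theorem hasFDerivAt_taylorTwo (hφ : ContDiffAt ℝ 2 φ x₀) (x : V) :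
    HasFDerivAt (taylorTwo φ x₀) (fderiv ℝ φ x₀ + fderiv ℝ (fderiv ℝ φ) x₀ (x - x₀)) x := by
  have hsymm : IsSymmSndFDerivAt ℝ φ x₀ := hφ.isSymmSndFDerivAt (by simp)
  have hid : HasFDerivAt (fun y => y - x₀) (ContinuousLinearMap.id ℝ V) x :=
    (hasFDerivAt_id x).sub_const x₀
  have hlin := (fderiv ℝ φ x₀).hasFDerivAt.comp x hid
  have hquad := ((fderiv ℝ (fderiv ℝ φ) x₀).hasFDerivAt.comp x hid).clm_apply hid
  refine ((hlin.const_add (φ x₀)).add (hquad.const_smul (1 / 2 : ℝ))).congr_fderiv ?_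
  ext v
  simp [hsymm.eq v, ← two_smul ℝ, smul_smul]

theorem sub_taylorTwo_isLittleO (hφ : ContDiffAt ℝ 2 φ x₀) :
    (fun x => φ x - taylorTwo φ x₀ x) =o[𝓝 x₀] fun x => ‖x - x₀‖ ^ 2 := by
  refine isLittleO_iff.2 fun δ hδ => ?_
  have hdiff : ∀ᶠ x in 𝓝 x₀, DifferentiableAt ℝ φ x :=
    (hφ.eventually (by simp)).mono fun x hx => hx.differentiableAt two_ne_zero
  have hfderiv : HasFDerivAt (fderiv ℝ φ) (fderiv ℝ (fderiv ℝ φ) x₀) x₀ :=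
    ((hφ.fderiv_right (m := 1) (by norm_num)).differentiableAt one_ne_zero).hasFDerivAt
  obtain ⟨r, hr, hball⟩ := eventually_nhds_iff_ball.1
    (hdiff.and ((hasFDerivAt_iff_isLittleO.1 hfderiv).def hδ))
  refine eventually_nhds_iff_ball.2 ⟨r, hr, fun x hx => ?_⟩
  have hsub : closedBall x₀ ‖x - x₀‖ ⊆ ball x₀ r :=
    closedBall_subset_ball (by rwa [← dist_eq_norm])
  have hbound : ∀ y ∈ closedBall x₀ ‖x - x₀‖,
      ‖fderiv ℝ φ y - (fderiv ℝ φ x₀ + fderiv ℝ (fderiv ℝ φ) x₀ (y - x₀))‖ ≤ δ * ‖x - x₀‖ := by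
    intro y hy
    rw [← sub_sub]
    exact (hball y (hsub hy)).2.trans
      (mul_le_mul_of_nonneg_left (by rwa [← dist_eq_norm]) hδ.le)
  have hmean := (convex_closedBall x₀ ‖x - x₀‖).norm_image_sub_le_of_norm_hasFDerivWithin_le
    (fun y hy => ((hball y (hsub hy)).1.hasFDerivAt.sub
      (hasFDerivAt_taylorTwo hφ y)).hasFDerivWithinAt)
    hbound (x := x₀) (y := x) (by simp) (by simp [dist_eq_norm])
  simpa [taylorTwo, pow_two, mul_assoc] using hmean

theorem exists_taylorTwo_le_add_pow_four (φ : V → ℝ) (x₀ : V) (m : ℝ) {r : ℝ} (hr : 0 < r) :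
    ∃ K ≥ 0, ∀ x, r ≤ ‖x - x₀‖ → taylorTwo φ x₀ x ≤ m + K * (‖x - x₀‖ ^ 2) ^ 2 := by
  set L := fderiv ℝ φ x₀
  set B := fderiv ℝ (fderiv ℝ φ) x₀
  refine ⟨(|φ x₀ - m| + ‖L‖ * r + 1 / 2 * (‖B‖ * r ^ 2)) / r ^ 4, by positivity, fun x hx => ?_⟩
  set t := ‖x - x₀‖ / r
  have ht : 1 ≤ t := (one_le_div hr).2 hx
  have hnorm : ‖x - x₀‖ = r * t := (mul_div_cancel₀ _ hr.ne').symm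
  have hL : L (x - x₀) ≤ ‖L‖ * (r * t) := hnorm ▸ (le_abs_self _).trans (L.le_opNorm _)
  have hB : B (x - x₀) (x - x₀) ≤ ‖B‖ * (r * t) * (r * t) :=
    hnorm ▸ (le_abs_self _).trans (B.le_opNorm₂ _ _)
  calc taylorTwo φ x₀ x
      = m + (φ x₀ - m) + L (x - x₀) + 1 / 2 * B (x - x₀) (x - x₀) := by
        simp only [taylorTwo, smul_eq_mul, L, B]; ring
    _ ≤ m + |φ x₀ - m| + ‖L‖ * (r * t) + 1 / 2 * (‖B‖ * (r * t) * (r * t)) := by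
        gcongr; exact le_abs_self _
    _ = m + (|φ x₀ - m| * t ^ 0 + ‖L‖ * r * t ^ 1 + 1 / 2 * (‖B‖ * r ^ 2) * t ^ 2) := by ring
    _ ≤ m + (|φ x₀ - m| * t ^ 4 + ‖L‖ * r * t ^ 4 + 1 / 2 * (‖B‖ * r ^ 2) * t ^ 4) := by
        gcongr <;> norm_num
    _ = m + (|φ x₀ - m| + ‖L‖ * r + 1 / 2 * (‖B‖ * r ^ 2)) / r ^ 4 * (‖x - x₀‖ ^ 2) ^ 2 := by
        rw [hnorm]; field_simp

end Calculus

section LoweredTaylor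

variable {V : Type*} [NormedAddCommGroup V] [InnerProductSpace ℝ V]

/-- The second-order Taylor polynomial of `φ` at `x₀`, lowered by `δ‖x - x₀‖² + K‖x - x₀‖⁴`.
The quadratic term makes it touch `φ` strictly from below near `x₀`; the quartic term, invisible
to the first two derivatives at `x₀`, pushes it below any constant away from `x₀`. -/
def loweredTaylor (φ : V → ℝ) (x₀ : V) (δ K : ℝ) (x : V) : ℝ :=
  taylorTwo φ x₀ x - δ * ‖x - x₀‖ ^ 2 - K * (‖x - x₀‖ ^ 2) ^ 2

@[simp]
theorem loweredTaylor_self (φ : V → ℝ) (x₀ : V) (δ K : ℝ) :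
    loweredTaylor φ x₀ δ K x₀ = φ x₀ := by
  simp [loweredTaylor, taylorTwo]

theorem contDiff_loweredTaylor (φ : V → ℝ) (x₀ : V) (δ K : ℝ) {m : WithTop ℕ∞} :
    ContDiff ℝ m (loweredTaylor φ x₀ δ K) := by
  have hsq : ContDiff ℝ m fun x : V => ‖x - x₀‖ ^ 2 :=
    (contDiff_id.sub contDiff_const).norm_sq ℝ
  exact ((contDiff_taylorTwo φ x₀).sub (contDiff_const.mul hsq)).sub
    (contDiff_const.mul (hsq.pow 2))

variable {φ : V → ℝ} {x₀ : V}

theorem fderiv_loweredTaylor (hφ : ContDiffAt ℝ 2 φ x₀) (δ K : ℝ) (x : V) :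
    fderiv ℝ (loweredTaylor φ x₀ δ K) x =
      fderiv ℝ φ x₀ + fderiv ℝ (fderiv ℝ φ) x₀ (x - x₀) -
        (2 * δ + 4 * K * ‖x - x₀‖ ^ 2) • innerSL ℝ (x - x₀) := by
  have hsq := ((hasFDerivAt_id x).sub_const x₀).norm_sq
  refine (((hasFDerivAt_taylorTwo hφ x).sub (hsq.const_mul δ)).sub
    ((hsq.pow 2).const_mul K)).fderiv.trans ?_
  ext v
  simp only [map_sub, id_eq, ContinuousLinearMap.comp_id, Nat.add_one_sub_one, pow_one,
    nsmul_eq_mul, Nat.cast_ofNat, sub_apply, add_apply, smul_apply, coe_innerSL_apply, smul_eq_mul]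
  ring

theorem fderiv_loweredTaylor_self (hφ : ContDiffAt ℝ 2 φ x₀) (δ K : ℝ) :
    fderiv ℝ (loweredTaylor φ x₀ δ K) x₀ = fderiv ℝ φ x₀ := by
  simp [fderiv_loweredTaylor hφ]

theorem fderiv_fderiv_loweredTaylor_self (hφ : ContDiffAt ℝ 2 φ x₀) (δ K : ℝ) (v w : V) :
    fderiv ℝ (fderiv ℝ (loweredTaylor φ x₀ δ K)) x₀ v w =
      fderiv ℝ (fderiv ℝ φ) x₀ v w - 2 * δ * inner ℝ v w := by
  let I : V →L[ℝ] V →L[ℝ] ℝ := innerSL ℝ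
  have hid : HasFDerivAt (fun y => y - x₀) (ContinuousLinearMap.id ℝ V) x₀ :=
    (hasFDerivAt_id x₀).sub_const x₀
  have htaylor := ((fderiv ℝ (fderiv ℝ φ) x₀).hasFDerivAt.comp x₀ hid).const_add (fderiv ℝ φ x₀)
  have hlowering := ((hid.norm_sq.const_mul (4 * K)).const_add (2 * δ)).smul
    (I.hasFDerivAt.comp x₀ hid)
  have hderiv := (htaylor.sub hlowering).congr_of_eventuallyEq
    (.of_forall (fderiv_loweredTaylor hφ δ K))
  have hI : I v w = inner ℝ v w := rfl
  simp [hderiv.fderiv, hI]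

theorem exists_loweredTaylor_add_le {u : V → ℝ} {s : Set V} (hφ : ContDiffAt ℝ 2 φ x₀)
    (hφu : ∀ᶠ x in 𝓝[s] x₀, φ x ≤ u x) (hu : BddBelow (u '' s)) {δ : ℝ} (hδ : 0 < δ) :
    ∃ K, ∀ x ∈ s, loweredTaylor φ x₀ (2 * δ) K x + δ * ‖x - x₀‖ ^ 2 ≤ u x := by
  obtain ⟨m, hm⟩ := hu
  obtain ⟨r, hr, hnear⟩ := eventually_nhds_iff_ball.1
    (((sub_taylorTwo_isLittleO hφ).def hδ).and (eventually_nhdsWithin_iff.1 hφu))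
  obtain ⟨K, hK, hfar⟩ := exists_taylorTwo_le_add_pow_four φ x₀ m hr
  refine ⟨K, fun x hx => ?_⟩
  have hquad : 0 ≤ δ * ‖x - x₀‖ ^ 2 := by positivity
  have hquart : 0 ≤ K * (‖x - x₀‖ ^ 2) ^ 2 := by positivity
  unfold loweredTaylor
  rcases lt_or_ge ‖x - x₀‖ r with hxr | hxr
  · obtain ⟨htaylor, hφx⟩ := hnear x (by rwa [mem_ball, dist_eq_norm])
    rw [norm_pow, norm_norm] at htaylor
    linarith [neg_le_of_abs_le htaylor, hφx hx]
  · linarith [hfar x hxr, hm (mem_image_of_mem u hx)]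

end LoweredTaylor

section DefiningMap

variable {V W : Type*} [NormedAddCommGroup V] [NormedSpace ℝ V]
  [NormedAddCommGroup W] [NormedSpace ℝ W]

/-- `H` is a defining map of `E` at `x`: a `C²` map that vanishes on `E` and whose norm bounds the
distance to `E`, up to a constant factor, near `x`. It is a smooth substitute for the distance
function, which is itself not differentiable on `E`. -/
structure IsDefiningMapAt (H : V → W) (E : Set V) (x : V) : Prop where
  contDiffAt : ContDiffAt ℝ 2 H x
  eventually_eq_zero : ∀ᶠ y in 𝓝[E] x, H y = 0
  infDist_isBigO : (fun y => infDist y E) =O[𝓝 x] H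

variable {E : Set V} {x : V}

theorem IsDefiningMapAt.congr {H H' : V → W} (hH : IsDefiningMapAt H E x) (h : H' =ᶠ[𝓝 x] H) :
    IsDefiningMapAt H' E x where
  contDiffAt := hH.contDiffAt.congr_of_eventuallyEq h
  eventually_eq_zero := by
    filter_upwards [hH.eventually_eq_zero, h.filter_mono nhdsWithin_le_nhds] with y hy hyH
    rw [hyH, hy]
  infDist_isBigO := hH.infDist_isBigO.trans_eventuallyEq h.symm

theorem IsDefiningMapAt.exists_contDiff [HasContDiffBump V] {H : V → W}
    (hH : IsDefiningMapAt H E x) : ∃ H' : V → W, ContDiff ℝ 2 H' ∧ IsDefiningMapAt H' E x := by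
  obtain ⟨H', hH', heq⟩ := exists_contDiff_eventuallyEq (m := 2) hH.contDiffAt
  exact ⟨H', hH', hH.congr heq⟩

theorem isDefiningMapAt_of_straightening {X : Type*} [NormedAddCommGroup X]
    [InnerProductSpace ℝ X] {S : Submodule ℝ X} [S.HasOrthogonalProjection] {Φ : V → X}
    {Ψ : X → V} (hx : x ∈ E) (hΦ : ContDiffAt ℝ 2 Φ x) (hΨ : ContDiffAt ℝ 1 Ψ (Φ x))
    (hΨΦ : ∀ᶠ y in 𝓝 x, Ψ (Φ y) = y) (hΦE : ∀ᶠ y in 𝓝[E] x, Φ y ∈ S)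
    (hΨS : ∀ᶠ z in 𝓝[S] (Φ x), Ψ z ∈ E) :
    IsDefiningMapAt (fun y => Φ y - S.starProjection (Φ y)) E x where
  contDiffAt := hΦ.sub (S.starProjection.contDiff.contDiffAt.comp x hΦ)
  eventually_eq_zero := by
    filter_upwards [hΦE] with y hy
    rw [S.starProjection_eq_self_iff.2 hy, sub_self]
  infDist_isBigO := by
    obtain ⟨K, t, ht, hlip⟩ := hΨ.exists_lipschitzOnWith
    have hproj : Tendsto (fun y => S.starProjection (Φ y)) (𝓝 x) (𝓝[S] (Φ x)) := by
      refine tendsto_nhdsWithin_iff.2 ⟨?_, .of_forall fun y => S.starProjection_apply_mem _⟩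
      simpa only [Function.comp_def, S.starProjection_eq_self_iff.2 (hΦE.self_of_nhdsWithin hx)]
        using (S.starProjection.continuous.tendsto (Φ x)).comp hΦ.continuousAt.tendsto
    refine .of_bound K ?_
    filter_upwards [hΨΦ, hΦ.continuousAt ht, hproj.eventually hΨS,
      hproj (mem_nhdsWithin_of_mem_nhds ht)] with y hy hyt hprojE hprojt
    calc ‖infDist y E‖ = infDist y E := Real.norm_of_nonneg infDist_nonneg
      _ ≤ dist y (Ψ (S.starProjection (Φ y))) := infDist_le_dist_of_mem hprojE
      _ = dist (Ψ (Φ y)) (Ψ (S.starProjection (Φ y))) := by rw [hy]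
      _ ≤ K * dist (Φ y) (S.starProjection (Φ y)) := hlip.dist_le_mul _ hyt _ hprojt
      _ = K * ‖Φ y - S.starProjection (Φ y)‖ := by rw [dist_eq_norm]

/-- The coordinate subspace onto which the charts of a `k`-dimensional submanifold straighten
it. -/
def coordinateSubspace (n k : ℕ) : Submodule ℝ (En n) where
  carrier := {z | ∀ i : Fin n, k ≤ (i : ℕ) → z i = 0}
  add_mem' hz hw i hi := by simp [hz i hi, hw i hi]
  zero_mem' := by simp
  smul_mem' c z hz i hi := by simp [hz i hi]

theorem IsSmoothClosedSubmanifold.exists_isDefiningMapAt {n k : ℕ} {E : Set (En n)}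
    (hE : IsSmoothClosedSubmanifold k E) {x : En n} (hx : x ∈ E) :
    ∃ H : En n → En n, IsDefiningMapAt H E x := by
  obtain ⟨U, O, Φ, Ψ, hU, hO, hxU, hΦ, hΨ, hΦUO, -, hΨΦ, -, himage⟩ := hE.2 x hx
  have hUx : U ∈ 𝓝 x := hU.mem_nhds hxU
  have hOx : O ∈ 𝓝 (Φ x) := hO.mem_nhds (hΦUO hxU)
  refine ⟨_, isDefiningMapAt_of_straightening (S := coordinateSubspace n k) (Φ := Φ) (Ψ := Ψ) hx
    (contDiffAt_infty.1 (hΦ.contDiffAt hUx) 2) (contDiffAt_infty.1 (hΨ.contDiffAt hOx) 1)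
    ?_ ?_ ?_⟩
  · filter_upwards [hUx] using hΨΦ
  · filter_upwards [mem_nhdsWithin_of_mem_nhds hUx, self_mem_nhdsWithin] with y hyU hyE
    exact (himage.subset (mem_image_of_mem Φ ⟨hyE, hyU⟩)).2
  · filter_upwards [mem_nhdsWithin_of_mem_nhds hOx, self_mem_nhdsWithin] with z hzO hzS
    obtain ⟨y, ⟨hyE, hyU⟩, rfl⟩ := himage.superset ⟨hzO, hzS⟩
    rwa [hΨΦ y hyU]

end DefiningMap

section Touching

theorem exists_isMinOn_sub_mem_ball {X : Type*} [PseudoMetricSpace X] [ProperSpace X]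
    {g h : X → ℝ} {x₀ : X} {r : ℝ} (hg : LowerSemicontinuousOn g (closedBall x₀ r))
    (hh : ContinuousOn h (closedBall x₀ r)) (hsphere : ∀ x ∈ sphere x₀ r, h x ≤ g x)
    (hlt : ∃ x ∈ closedBall x₀ r, g x < h x) :
    ∃ y ∈ ball x₀ r, g y < h y ∧ IsMinOn (fun x => g x - h x) (closedBall x₀ r) y := by
  obtain ⟨x₁, hx₁, hx₁lt⟩ := hlt
  have hlsc : LowerSemicontinuousOn (fun x => g x - h x) (closedBall x₀ r) := by
    simpa only [sub_eq_add_neg, Pi.neg_apply] using hg.add hh.neg.lowerSemicontinuousOn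
  obtain ⟨y, hy, hmin⟩ := hlsc.exists_isMinOn ⟨x₁, hx₁⟩ (isCompact_closedBall x₀ r)
  have hylt : g y < h y := sub_neg.1 ((hmin hx₁).trans_lt (sub_neg.2 hx₁lt))
  refine ⟨y, mem_ball.2 (lt_of_le_of_ne hy fun hyr => ?_), hylt, hmin⟩
  exact (hsphere y hyr).not_gt hylt

/-- The test functions `p + ℓ ∘ H + c`, parametrised by `(ℓ, c)`: each is as smooth as `p` and `H`,
and they recover the cone `p + ε‖H‖` as a supremum over `‖ℓ‖ ≤ ε`. -/
def tiltedTest {X W : Type*} [NormedAddCommGroup W] [NormedSpace ℝ W] (p : X → ℝ) (H : X → W)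
    (q : StrongDual ℝ W × ℝ) (x : X) : ℝ :=
  p x + q.1 (H x) + q.2

theorem exists_isMinOn_sub_tiltedTest {X W : Type*} [NormedAddCommGroup W] [NormedSpace ℝ W]
    {u p : X → ℝ} {H : X → W} {ε : ℝ} (hε : 0 ≤ ε) {s : Set X} {y : X}
    (hmin : IsMinOn (fun x => u x - p x - ε * ‖H x‖) s y) :
    ∃ ℓ : StrongDual ℝ W, ‖ℓ‖ ≤ ε ∧
      u y = tiltedTest p H (ℓ, u y - p y - ε * ‖H y‖) y ∧
      IsMinOn (fun x => u x - tiltedTest p H (ℓ, u y - p y - ε * ‖H y‖) x) s y := by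
  obtain ⟨g, hg, hgy⟩ := exists_dual_vector'' ℝ (H y)
  have hgle : ∀ w, g w ≤ ‖w‖ := fun w =>
    (le_abs_self _).trans ((g.le_opNorm w).trans (mul_le_of_le_one_left (norm_nonneg w) hg))
  refine ⟨ε • g, ?_, ?_, fun x hx => ?_⟩
  · rw [norm_smul, Real.norm_of_nonneg hε]
    exact mul_le_of_le_one_right hε hg
  · simp [tiltedTest, hgy]
  · have hx : u y - p y - ε * ‖H y‖ ≤ u x - p x - ε * ‖H x‖ := hmin hx
    have hcone : ε * g (H x) ≤ ε * ‖H x‖ := mul_le_mul_of_nonneg_left (hgle _) hε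
    simp only [tiltedTest, smul_apply, hgy, Real.ringHom_apply, smul_eq_mul, add_add_sub_cancel,
      add_sub_cancel, sub_self, sub_nonneg, mem_ofPred_eq]
    linarith

variable {n : ℕ} {Ω E : Set (En n)} {u p : En n → ℝ} {x₀ : En n} {δ : ℝ}

theorem LowerConicalOn.exists_sub_lt_mul_infDist (hcone : LowerConicalOn Ω u E) (hx₀ : x₀ ∈ E)
    (hp : ContDiff ℝ ∞ p) (hpx₀ : u x₀ = p x₀) (hδ : 0 < δ)
    (hup : ∀ x ∈ Ω, p x + δ * ‖x - x₀‖ ^ 2 ≤ u x) {ε : ℝ} (hε : 0 < ε) :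
    ∃ x ∈ ball x₀ (ε / δ), u x - p x < ε * infDist x E := by
  obtain ⟨x, hxΩ, hx⟩ := hcone (fun y => -p y) hp.neg.contDiffOn x₀ hx₀ ε hε
  have hlt : u x - p x < ε * infDist x E := by linarith
  have hdist : infDist x E ≤ ‖x - x₀‖ := by
    rw [← dist_eq_norm]
    exact infDist_le_dist_of_mem hx₀
  have hsq : δ * ‖x - x₀‖ * ‖x - x₀‖ < ε * ‖x - x₀‖ := by
    linarith [hup x hxΩ, mul_le_mul_of_nonneg_left hdist hε.le, pow_two ‖x - x₀‖]
  refine ⟨x, ?_, hlt⟩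
  rw [mem_ball, dist_eq_norm, lt_div_iff₀' hδ]
  exact lt_of_mul_lt_mul_right hsq (norm_nonneg _)

variable {W : Type*} [NormedAddCommGroup W] {H : En n → W}

theorem LowerConicalOn.eventually_exists_isMinOn (hcone : LowerConicalOn Ω u E) (hx₀ : x₀ ∈ E)
    (hu : LowerSemicontinuousOn u Ω) (hp : ContDiff ℝ ∞ p) (hpx₀ : u x₀ = p x₀) (hδ : 0 < δ)
    (hup : ∀ x ∈ Ω, p x + δ * ‖x - x₀‖ ^ 2 ≤ u x) (hH : Continuous H) {r C : ℝ} (hr : 0 < r)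
    (hC : 0 < C) (hrΩ : closedBall x₀ r ⊆ Ω) (hHr : ∀ x ∈ closedBall x₀ r, ‖H x‖ ≤ 1)
    (hHE : ∀ x ∈ closedBall x₀ r, infDist x E ≤ C * ‖H x‖) :
    ∀ᶠ ε in 𝓝[>] (0 : ℝ), ∃ y ∈ ball x₀ r, u y - p y < ε * ‖H y‖ ∧
      IsMinOn (fun x => u x - p x - ε * ‖H x‖) (closedBall x₀ r) y := by
  have hsmall : ∀ {b : ℝ}, 0 < b → ∀ᶠ ε in 𝓝[>] (0 : ℝ), ε < b := fun hb =>
    eventually_nhdsWithin_of_eventually_nhds (eventually_lt_nhds hb)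
  filter_upwards [self_mem_nhdsWithin, hsmall (b := δ * r ^ 2) (by positivity),
    hsmall (b := r * δ * C) (by positivity)] with ε (hε : 0 < ε) hεsphere hεball
  apply exists_isMinOn_sub_mem_ball
  · simpa only [sub_eq_add_neg, Pi.neg_apply] using (hu.mono hrΩ).add
      hp.continuous.neg.continuousOn.lowerSemicontinuousOn
  · exact (continuous_const.mul hH.norm).continuousOn
  · intro x hx
    have hxr := sphere_subset_closedBall hx
    have hupx := hup x (hrΩ hxr)
    rw [← dist_eq_norm, mem_sphere.1 hx] at hupx
    linarith [mul_le_of_le_one_right hε.le (hHr x hxr)]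
  · obtain ⟨x, hx, hlt⟩ :=
      hcone.exists_sub_lt_mul_infDist hx₀ hp hpx₀ hδ hup (div_pos hε hC)
    have hεr : ε / C / δ ≤ r := by
      rw [div_le_iff₀ hδ, div_le_iff₀ hC]
      exact hεball.le
    have hxr : x ∈ closedBall x₀ r := ball_subset_closedBall (ball_subset_ball hεr hx)
    refine ⟨x, hxr, hlt.trans_le ?_⟩
    rw [div_mul_eq_mul_div, div_le_iff₀ hC, mul_assoc, mul_comm _ C]
    exact mul_le_mul_of_nonneg_left (hHE x hxr) hε.le

theorem LowerConicalOn.frequently_tiltedTest_touches [NormedSpace ℝ W]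
    (hcone : LowerConicalOn Ω u E) (hΩ : IsOpen Ω) (hx₀Ω : x₀ ∈ Ω) (hx₀E : x₀ ∈ E)
    (hu : LowerSemicontinuousOn u Ω) (hp : ContDiff ℝ ∞ p) (hpx₀ : u x₀ = p x₀) (hδ : 0 < δ)
    (hup : ∀ x ∈ Ω, p x + δ * ‖x - x₀‖ ^ 2 ≤ u x) (hH : Continuous H)
    (hHE : IsDefiningMapAt H E x₀) :
    ∃ᶠ z in 𝓝 ((0 : StrongDual ℝ W × ℝ), x₀), z.2 ∈ Ω \ E ∧ u z.2 = tiltedTest p H z.1 z.2 ∧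
      IsLocalMin (fun x => u x - tiltedTest p H z.1 x) z.2 := by
  refine frequently_iff.2 fun {N} hN => ?_
  obtain ⟨A, hA, B, hB, hAB⟩ := mem_nhds_prod_iff.1 hN
  obtain ⟨ρ, hρ, hρA⟩ := Metric.mem_nhds_iff.1 hA
  obtain ⟨C, hC, hbound⟩ := hHE.infDist_isBigO.exists_pos
  have hHsmall : ∀ᶠ x in 𝓝 x₀, ‖H x‖ < 1 := hH.norm.continuousAt.eventually_lt_const
    (by simp [hHE.eventually_eq_zero.self_of_nhdsWithin hx₀E])
  obtain ⟨r, hr, hgood⟩ := nhds_basis_closedBall.eventually_iff.1 <|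
    ((hΩ.eventually_mem hx₀Ω).and hB).and <| (hHsmall.and hbound.bound).and <|
      eventually_nhdsWithin_iff.1 hHE.eventually_eq_zero
  obtain ⟨ε, ⟨y, hy, hlt, hmin⟩, hε, hερ⟩ :=
    ((hcone.eventually_exists_isMinOn hx₀E hu hp hpx₀ hδ hup hH hr hC
      (fun x hx => (hgood hx).1.1) (fun x hx => (hgood hx).2.1.1.le)
      (fun x hx => (le_abs_self _).trans (hgood hx).2.1.2)).and
      (Ioo_mem_nhdsGT hρ)).exists
  obtain ⟨⟨hyΩ, hyB⟩, ⟨hHy, -⟩, hzero⟩ := hgood (ball_subset_closedBall hy)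
  obtain ⟨ℓ, hℓ, htouch, hℓmin⟩ := exists_isMinOn_sub_tiltedTest hε.le hmin
  have hpu : 0 ≤ u y - p y := by
    linarith [hup y hyΩ, mul_nonneg hδ.le (sq_nonneg ‖y - x₀‖)]
  have hyE : y ∉ E := fun h => by
    rw [hzero h, norm_zero, mul_zero] at hlt
    exact hpu.not_gt hlt
  have hc : |u y - p y - ε * ‖H y‖| < ρ := by
    rw [abs_lt]
    constructor <;> linarith [mul_le_of_le_one_right hε.le hHy.le]
  refine ⟨((ℓ, _), y), hAB ⟨hρA ?_, hyB⟩, ⟨hyΩ, hyE⟩, htouch,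
    hℓmin.isLocalMin (closedBall_mem_nhds_of_mem hy)⟩
  rw [mem_ball_zero_iff, Prod.norm_mk]
  exact max_lt (hℓ.trans_lt hερ) hc

end Touching

section Jets

variable {n : ℕ}

/-- The point, value, gradient and Hessian of `φ` at `x`: the arguments at which a second-order
operator is evaluated. -/
def secondJet (φ : En n → ℝ) (x : En n) : En n × ℝ × En n × Matrix (Fin n) (Fin n) ℝ :=
  (x, φ x, gradient φ x, hess φ x)

theorem hess_apply (φ : En n → ℝ) (x : En n) (i j : Fin n) :
    hess φ x i j =
      fderiv ℝ (fderiv ℝ φ) x (EuclideanSpace.single i 1) (EuclideanSpace.single j 1) := by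
  simp [hess, iteratedFDeriv_two_apply]

theorem continuous_secondJet {P : Type*} [NormedAddCommGroup P] [NormedSpace ℝ P]
    {T : P → En n → ℝ} (hT : ContDiff ℝ 2 (Function.uncurry T)) :
    Continuous fun z : P × En n => secondJet (T z.1) z.2 := by
  have hfderiv : ContDiff ℝ 1 fun z : P × En n => fderiv ℝ (T z.1) z.2 :=
    ContDiff.fderiv (f := fun (z : P × En n) y => T z.1 y)
      (hT.comp (by fun_prop : ContDiff ℝ 2 fun w : (P × En n) × En n => (w.1.1, w.2)))
      contDiff_snd (by norm_num)
  have hfderiv₂ : ContDiff ℝ 0 fun z : P × En n => fderiv ℝ (fderiv ℝ (T z.1)) z.2 :=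
    ContDiff.fderiv (f := fun (z : P × En n) y => fderiv ℝ (T z.1) y)
      (hfderiv.comp (by fun_prop : ContDiff ℝ 1 fun w : (P × En n) × En n => (w.1.1, w.2)))
      contDiff_snd (by norm_num)
  refine continuous_snd.prodMk (hT.continuous.prodMk (.prodMk ?_ (continuous_matrix fun i j => ?_)))
  · exact (InnerProductSpace.toDual ℝ (En n)).symm.continuous.comp hfderiv.continuous
  · simp only [hess_apply]
    exact (hfderiv₂.continuous.clm_apply continuous_const).clm_apply continuous_const

variable {φ : En n → ℝ} {x₀ : En n}

theorem gradient_loweredTaylor_self (hφ : ContDiffAt ℝ 2 φ x₀) (δ K : ℝ) :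
    gradient (loweredTaylor φ x₀ δ K) x₀ = gradient φ x₀ := by
  simp only [gradient, fderiv_loweredTaylor_self hφ]

theorem hess_loweredTaylor_self (hφ : ContDiffAt ℝ 2 φ x₀) (δ K : ℝ) :
    hess (loweredTaylor φ x₀ δ K) x₀ = hess φ x₀ - (2 * δ) • 1 := by
  ext i j
  simp [hess_apply, fderiv_fderiv_loweredTaylor_self hφ, Matrix.one_apply,
    EuclideanSpace.inner_single_left, PiLp.single_apply]

end Jets

section Removability

theorem semicontinuousAt_comp_of_isOpen {X Y Z : Type*} [TopologicalSpace X] [TopologicalSpace Y]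
    {R : Y → Z → Prop} {s : Set Y} (hR : SemicontinuousOn R s) (hs : IsOpen s) {g : X → Y} {x : X}
    (hg : ContinuousAt g x) (hx : g x ∈ s) : SemicontinuousAt (fun y => R (g y)) x := fun t ht =>
  hg.eventually (hs.nhdsWithin_eq hx ▸ hR _ hx t ht)

theorem le_of_frequently_le {X Y : Type*} [TopologicalSpace X] [LinearOrder Y] [DenselyOrdered Y]
    {g h : X → Y} {x : X} (hg : LowerSemicontinuousAt g x) (hh : UpperSemicontinuousAt h x)
    (hgh : ∃ᶠ y in 𝓝 x, g y ≤ h y) : g x ≤ h x := by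
  by_contra! hlt
  obtain ⟨t, hht, htg⟩ := exists_between hlt
  obtain ⟨y, hy, hty, hyt⟩ := (hgh.and_eventually ((hg t htg).and (hh t hht))).exists
  exact (hyt.trans hty).not_ge hy

variable {n : ℕ} {Ω E : Set (En n)} {u f : En n → ℝ} {x₀ : En n}
  {W : Type*} [NormedAddCommGroup W] [NormedSpace ℝ W]
  {F : En n → ℝ → En n → Matrix (Fin n) (Fin n) ℝ → ℝ}

theorem operator_le_of_smooth_strict_test (hΩ : IsOpen Ω)
    (hF : LowerSemicontinuousOn
      (fun q : En n × ℝ × En n × Matrix (Fin n) (Fin n) ℝ => F q.1 q.2.1 q.2.2.1 q.2.2.2)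
      {q | q.1 ∈ Ω})
    (hf : UpperSemicontinuousOn f Ω) (hu : LowerSemicontinuousOn u Ω)
    (hcone : LowerConicalOn Ω u E) (hvisc : IsViscositySupersolution F f (Ω \ E) u)
    (hx₀Ω : x₀ ∈ Ω) (hx₀E : x₀ ∈ E) {H : En n → W} (hH : IsDefiningMapAt H E x₀) {p : En n → ℝ}
    (hp : ContDiff ℝ ∞ p) (hpx₀ : u x₀ = p x₀) {δ : ℝ} (hδ : 0 < δ)
    (hup : ∀ x ∈ Ω, p x + δ * ‖x - x₀‖ ^ 2 ≤ u x) :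
    F x₀ (p x₀) (gradient p x₀) (hess p x₀) ≤ f x₀ := by
  obtain ⟨G, hG, hGE⟩ := hH.exists_contDiff
  have hp₂ : ContDiff ℝ 2 p := contDiff_infty.1 hp 2
  have hT : ContDiff ℝ 2 (Function.uncurry (tiltedTest p G)) := by
    unfold tiltedTest Function.uncurry
    fun_prop
  have hT₀ : tiltedTest p G 0 = p := by
    funext x
    simp [tiltedTest]
  have hFjet : LowerSemicontinuousAt (fun z : (StrongDual ℝ W × ℝ) × En n =>
      F z.2 (tiltedTest p G z.1 z.2) (gradient (tiltedTest p G z.1) z.2)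
        (hess (tiltedTest p G z.1) z.2)) (0, x₀) :=
    semicontinuousAt_comp_of_isOpen hF (hΩ.preimage continuous_fst)
      (continuous_secondJet hT).continuousAt hx₀Ω
  have hfsnd : UpperSemicontinuousAt
      (fun z : (StrongDual ℝ W × ℝ) × En n => f z.2) (0, x₀) :=
    semicontinuousAt_comp_of_isOpen hf hΩ continuousAt_snd hx₀Ω
  have hle := le_of_frequently_le hFjet hfsnd <|
    (hcone.frequently_tiltedTest_touches hΩ hx₀Ω hx₀E hu hp hpx₀ hδ hup hG.continuous hGE).mono
      fun z ⟨hz, htouch, hmin⟩ => hvisc _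
        (hT.comp (contDiff_const.prodMk contDiff_id)).contDiffOn z.2 hz htouch (hmin.on _)
  simpa only [hT₀] using hle

theorem removable_submanifold_singularity_general (hΩ : IsOpen Ω)
    (hF : LowerSemicontinuousOn
      (fun q : En n × ℝ × En n × Matrix (Fin n) (Fin n) ℝ => F q.1 q.2.1 q.2.2.1 q.2.2.2)
      {q | q.1 ∈ Ω})
    (hE : ∀ x ∈ Ω ∩ E, ∃ H : En n → W, IsDefiningMapAt H E x)
    (hf : UpperSemicontinuousOn f Ω) (hu : LowerSemicontinuousOn u Ω) (hubd : BddBelow (u '' Ω))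
    (hcone : LowerConicalOn Ω u E) (hvisc : IsViscositySupersolution F f (Ω \ E) u) :
    IsViscositySupersolution F f Ω u := by
  intro φ hφ x₀ hx₀ hux₀ hmin
  by_cases hx₀E : x₀ ∉ E
  · exact hvisc φ (hφ.mono sdiff_subset) x₀ ⟨hx₀, hx₀E⟩ hux₀ (hmin.on_subset sdiff_subset)
  rw [not_not] at hx₀E
  obtain ⟨H, hH⟩ := hE x₀ ⟨hx₀, hx₀E⟩
  have hφx₀ : ContDiffAt ℝ 2 φ x₀ := hφ.contDiffAt (hΩ.mem_nhds hx₀)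
  have hφu : ∀ᶠ x in 𝓝[Ω] x₀, φ x ≤ u x := hmin.mono fun x hx => by linarith
  have hlowered : ∀ δ : ℝ, 0 < δ →
      F x₀ (φ x₀) (gradient φ x₀) (hess φ x₀ - (2 * (2 * δ)) • 1) ≤ f x₀ := fun δ hδ => by
    obtain ⟨K, hK⟩ := exists_loweredTaylor_add_le hφx₀ hφu hubd hδ
    have hle := operator_le_of_smooth_strict_test hΩ hF hf hu hcone hvisc hx₀ hx₀E hH
      (contDiff_loweredTaylor φ x₀ (2 * δ) K) (by rwa [loweredTaylor_self]) hδ hK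
    rwa [loweredTaylor_self, gradient_loweredTaylor_self hφx₀, hess_loweredTaylor_self hφx₀] at hle
  have hFδ : LowerSemicontinuousAt (fun δ : ℝ =>
      F x₀ (φ x₀) (gradient φ x₀) (hess φ x₀ - (2 * (2 * δ)) • 1)) 0 :=
    semicontinuousAt_comp_of_isOpen hF (hΩ.preimage continuous_fst)
      (g := fun δ : ℝ => (x₀, φ x₀, gradient φ x₀, hess φ x₀ - (2 * (2 * δ)) • 1))
      (by fun_prop) hx₀
  have hpos : ∃ᶠ δ : ℝ in 𝓝 0, 0 < δ :=
    (eventually_mem_nhdsWithin (s := Ioi (0 : ℝ))).frequently.filter_mono nhdsWithin_le_nhds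
  simpa using le_of_frequently_le hFδ upperSemicontinuousAt_const (hpos.mono hlowered)

end Removability

/-- **Theorem 1.3.** A viscosity supersolution of a degenerate elliptic equation outside a
smooth closed `k`-dimensional submanifold `E` of `Ω` (`0 ≤ k ≤ n-1`), which is
lowerconical on `E`, is a viscosity supersolution in all of `Ω`. -/
theorem removable_submanifold_singularity
    {n : ℕ} (hn : 1 ≤ n) (Ω : Set (En n))
    (hΩopen : IsOpen Ω) (hΩconn : IsConnected Ω) (hΩbdd : Bornology.IsBounded Ω)
    (F : En n → ℝ → En n → Matrix (Fin n) (Fin n) ℝ → ℝ)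
    (hFcont : ContinuousOn
      (fun q : En n × ℝ × En n × Matrix (Fin n) (Fin n) ℝ => F q.1 q.2.1 q.2.2.1 q.2.2.2)
      {q | q.1 ∈ Ω})
    (hFell : DegenerateElliptic Ω F)
    (k : ℕ) (hk : k ≤ n - 1)
    (E : Set (En n)) (hEΩ : E ⊆ Ω) (hE : IsSmoothClosedSubmanifold k E)
    (f : En n → ℝ) (hf : UpperSemicontinuousOn f Ω)
    (u : En n → ℝ) (hu : LowerSemicontinuousOn u Ω) (hubd : BddBelow (u '' Ω))
    (hcone : LowerConicalOn Ω u E)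
    (hvisc : IsViscositySupersolution F f (Ω \ E) u) :
    IsViscositySupersolution F f Ω u := by
  exact removable_submanifold_singularity_general hΩopen hFcont.lowerSemicontinuousOn
    (fun _ hx => hE.exists_isDefiningMapAt hx.2) hf hu hubd hcone hvisc
end
end

section
/- Let n ≥ 2, let Ω ⊂ ℝⁿ be a domain (bounded connected open set), and let E ⊂ Ω be a smooth closed embedded submanifold of dimension k with 0 ≤ k ≤ n − 2. Assume u ∈ LSC(Ω ∖ E) satisfies inf_{Ω∖E} u > −∞ and λ₁(∇²u) + ⋯ + λ_{k+2}(∇²u) ≤ 0 in Ω ∖ E in the viscosity sense, where λ₁(M) ≤ ⋯ ≤ λₙ(M) denote the eigenvalues of a symmetric matrix M in non-decreasing order. Then, extending u to E by u(x) := liminf_{y → x, y ∈ Ω∖E} u(y), the extended function belongs to LSC(Ω) and is lowerconical on E. -/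
open Set Metric

noncomputable section

/-- The eigenvalues of a symmetric matrix, listed in non-decreasing order
`λ₁(M) ≤ ⋯ ≤ λₙ(M)` (junk value `0` for non-symmetric matrices). -/
noncomputable def sortedEigs {n : ℕ} (M : Matrix (Fin n) (Fin n) ℝ) : Fin n → ℝ :=
  if h : M.IsHermitian then h.eigenvalues ∘ Tuple.sort h.eigenvalues else fun _ => 0

/-- `λ₁(M) + ⋯ + λ_m(M)`, the sum of the `m` smallest eigenvalues of a symmetric matrix. -/
noncomputable def sumSmallestEigs {n : ℕ} (m : ℕ) (M : Matrix (Fin n) (Fin n) ℝ) : ℝ :=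
  ∑ i : Fin n, if (i : ℕ) < m then sortedEigs M i else 0

open Classical in
/-- The extension of `u` from `Ω \ E` to `E` by `u(x) := liminf_{y → x, y ∈ Ω \ E} u(y)`,
with values in the extended reals. -/
noncomputable def liminfExtension {n : ℕ} (Ω E : Set (En n)) (u : En n → ℝ) :
    En n → EReal :=
  fun x => if x ∈ E then Filter.liminf (fun y => (u y : EReal)) (nhdsWithin x (Ω \ E))
    else (u x : EReal)

/-- Lowerconical on `E`, for an extended-real-valued function `v`: for every
`η ∈ C^∞(Ω)`, every `xb ∈ E` and every `ε > 0`,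
`inf_{x ∈ Ω} ((v+η)(x) - (v+η)(xb) - ε · dist(x, E)) < 0`. -/
def ERealLowerConicalOn {n : ℕ} (Ω : Set (En n)) (v : En n → EReal) (E : Set (En n)) : Prop :=
  ∀ η : En n → ℝ, ContDiffOn ℝ (⊤ : ℕ∞) η Ω → ∀ xb ∈ E, ∀ ε > 0,
    ∃ x ∈ Ω, v x + (η x : EReal) - (v xb + (η xb : EReal))
      - ((ε * Metric.infDist x E : ℝ) : EReal) < 0

/-!
Near a point of `E` let `g` be a local defining submersion. Its Gauss–Newton step `w` vanishes on
`E`, and `‖w‖²` agrees with the squared distance to `E` up to relative errors of the order of the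
distance itself, for the gradient and for the trace of the Hessian on `(k + 2)`-dimensional
subspaces. Write `d = ‖w‖`. On such a subspace the trace of the Hessian of `e d + 2 α log d` tends
to `+∞` at `E`: for the logarithm the terms of order `d⁻²` cancel, which is why errors of relative
order `d` are affordable, and what remains is beaten by the term `e / d` coming from `e d`.

Suppose the extension of `u` is not lowerconical at `p ∈ E`, so that `u + η` lies above its value
at `p` by at least `e d`. Then `u + η + |x - p|² - e d - 2 α log d`, with `α` small, has an interior
local minimum off `E`: the logarithm keeps minimizers away from `E`, and `|x - p|²` keeps them away
from the boundary of a small ball. This contradicts the viscosity inequality.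
-/

open Filter Topology

section LinearAlgebra

variable {X F ι : Type*} [NormedAddCommGroup X] [InnerProductSpace ℝ X] [Fintype ι]
  [NormedAddCommGroup F] [InnerProductSpace ℝ F]

lemma sum_sq_apply_le_sq_norm [CompleteSpace X] {v : ι → X} (hv : Orthonormal ℝ v)
    (ℓ : StrongDual ℝ X) : ∑ i, ℓ (v i) ^ 2 ≤ ‖ℓ‖ ^ 2 := by
  have riesz (x : X) : inner ℝ x ((InnerProductSpace.toDual ℝ X).symm ℓ) = ℓ x := by
    rw [real_inner_comm, InnerProductSpace.toDual_symm_apply]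
  have bessel := hv.sum_inner_products_le ((InnerProductSpace.toDual ℝ X).symm ℓ)
    (s := Finset.univ)
  simpa only [riesz, Real.norm_eq_abs, sq_abs, LinearIsometryEquiv.norm_map] using bessel

lemma sum_sq_norm_starProjection_le_finrank (K : Submodule ℝ X) [FiniteDimensional ℝ K]
    {v : ι → X} (hv : Orthonormal ℝ v) :
    ∑ i, ‖K.starProjection (v i)‖ ^ 2 ≤ Module.finrank ℝ K := by
  let e := stdOrthonormalBasis ℝ K
  have parseval (x : X) : ‖K.starProjection x‖ ^ 2 = ∑ j, inner ℝ x (e j : X) ^ 2 := by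
    rw [K.starProjection_apply, ← Submodule.coe_norm, ← e.sum_sq_norm_inner_right]
    simp [real_inner_comm]
  calc ∑ i, ‖K.starProjection (v i)‖ ^ 2
      = ∑ j, ∑ i, inner ℝ (v i) (e j : X) ^ 2 := by
        simp only [parseval]
        exact Finset.sum_comm
    _ ≤ ∑ j, ‖(e j : X)‖ ^ 2 := Finset.sum_le_sum fun j _ => by
        simpa using hv.sum_inner_products_le (e j : X) (s := Finset.univ)
    _ = Module.finrank ℝ K := by simp [show ∀ j, ‖(e j : X)‖ = 1 from e.orthonormal.1]

lemma card_sub_finrank_le_sum_sq_norm_starProjection (K : Submodule ℝ X) [FiniteDimensional ℝ K]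
    {v : ι → X} (hv : Orthonormal ℝ v) :
    (Fintype.card ι : ℝ) - Module.finrank ℝ K ≤ ∑ i, ‖Kᗮ.starProjection (v i)‖ ^ 2 := by
  have pythagoras (i : ι) : ‖Kᗮ.starProjection (v i)‖ ^ 2 = 1 - ‖K.starProjection (v i)‖ ^ 2 := by
    have := K.norm_sq_eq_add_norm_sq_starProjection (v i)
    rw [hv.1 i] at this
    linarith
  simp only [pythagoras, Finset.sum_sub_distrib, Finset.sum_const, Finset.card_univ,
    nsmul_eq_mul, mul_one]
  exact sub_le_sub_left (sum_sq_norm_starProjection_le_finrank K hv) _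

variable [CompleteSpace X]

open ContinuousLinearMap

lemma isUnit_comp_adjoint_iff_surjective [FiniteDimensional ℝ F] {G : X →L[ℝ] F} :
    IsUnit (G ∘L adjoint G) ↔ Function.Surjective G := by
  refine ⟨fun h => ?_, fun hG => ?_⟩
  · exact ((isUnit_iff_bijective.1 h).2).of_comp (g := adjoint G)
  · have hinj : Function.Injective (G ∘L adjoint G) := by
      rw [coe_comp, self_comp_adjoint_injective_iff, injective_iff_map_eq_zero]
      intro y hy
      obtain ⟨z, rfl⟩ := hG y
      rw [← inner_self_eq_zero (𝕜 := ℝ), ← adjoint_inner_right, hy, inner_zero_right]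
    exact isUnit_iff_bijective.2
      ⟨hinj, LinearMap.surjective_of_injective (f := (G ∘L adjoint G : F →ₗ[ℝ] F)) hinj⟩

variable [CompleteSpace F]

/-- The Moore–Penrose inverse `G* (G G*)⁻¹` of a continuous linear surjection `G`, written with
`Ring.inverse` so that its smooth dependence on `G` is inherited from that of inversion. It is
zero when `G G*` is not invertible. -/
def pseudoinverse (G : X →L[ℝ] F) : F →L[ℝ] X :=
  adjoint G ∘L Ring.inverse (G ∘L adjoint G)

lemma apply_pseudoinverse_apply {G : X →L[ℝ] F} (hG : IsUnit (G ∘L adjoint G)) (y : F) :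
    G (pseudoinverse G y) = y :=
  DFunLike.congr_fun (Ring.mul_inverse_cancel _ hG) y

lemma pseudoinverse_comp_self {G : X →L[ℝ] F} (hG : IsUnit (G ∘L adjoint G)) :
    pseudoinverse G ∘L G = G.kerᗮ.starProjection := by
  ext x
  refine (Submodule.eq_starProjection_of_mem_orthogonal ?_ ?_).symm
  · intro z hz
    simp [pseudoinverse, adjoint_inner_right, show G z = 0 from hz]
  · rw [Submodule.orthogonal_orthogonal]
    simp [apply_pseudoinverse_apply hG]

lemma contDiff_adjoint {m : WithTop ℕ∞} :
    ContDiff ℝ m (adjoint : (X →L[ℝ] F) → F →L[ℝ] X) :=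
  IsBoundedLinearMap.contDiff
    ⟨⟨map_add _, by simp⟩, 1, one_pos, by simp⟩

lemma contDiffAt_pseudoinverse {m : WithTop ℕ∞} {G : X →L[ℝ] F}
    (hG : IsUnit (G ∘L adjoint G)) : ContDiffAt ℝ m (pseudoinverse : (X →L[ℝ] F) → _) G := by
  have hinv : ContDiffAt ℝ m Ring.inverse (G ∘L adjoint G) := by
    obtain ⟨T, hT⟩ := hG
    exact hT ▸ contDiffAt_ringInverse ℝ T
  have hcomp : ContDiffAt ℝ m (fun L : X →L[ℝ] F => L ∘L adjoint L) G :=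
    contDiffAt_id.clm_comp contDiff_adjoint.contDiffAt
  exact contDiff_adjoint.contDiffAt.clm_comp (ContDiffAt.comp (g := Ring.inverse) G hinv hcomp)

lemma eventually_isUnit_comp_adjoint {G : X →L[ℝ] F} (hG : IsUnit (G ∘L adjoint G)) :
    ∀ᶠ L in 𝓝 G, IsUnit (L ∘L adjoint L) := by
  have hcont : ContinuousAt (fun L : X →L[ℝ] F => L ∘L adjoint L) G :=
    (contDiff_id.clm_comp (contDiff_adjoint (m := 0))).continuous.continuousAt
  exact hcont.eventually (Units.isOpen.mem_nhds hG)

end LinearAlgebra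

section SecondDerivative

lemma eventually_norm_le_norm_add_one {A B : Type*} [TopologicalSpace A]
    [SeminormedAddCommGroup B] {h : A → B} {a : A} (hh : ContinuousAt h a) :
    ∀ᶠ y in 𝓝 a, ‖h y‖ ≤ ‖h a‖ + 1 :=
  (hh.norm.eventually_lt_const (lt_add_one _)).mono fun _ => le_of_lt

variable {X Y : Type*} [NormedAddCommGroup X] [NormedSpace ℝ X]

/-- The second derivative of `f` at `x` in the direction `v`, that is, the value at `v` of the
quadratic form of the Hessian of `f` at `x`. -/
def secondDerivAlong [NormedAddCommGroup Y] [NormedSpace ℝ Y] (f : X → Y) (x v : X) : Y :=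
  fderiv ℝ (fderiv ℝ f) x v v

section NormedSpace

variable [NormedAddCommGroup Y] [NormedSpace ℝ Y] {f g : X → Y} {x : X}

lemma differentiableAt_fderiv_of_contDiffAt_two (hf : ContDiffAt ℝ 2 f x) :
    DifferentiableAt ℝ (fderiv ℝ f) x :=
  (hf.fderiv_right (m := 1) (by norm_num)).differentiableAt one_ne_zero

lemma eventually_norm_fderiv_fderiv_le (hf : ContDiffAt ℝ 2 f x) :
    ∀ᶠ y in 𝓝 x, ‖fderiv ℝ (fderiv ℝ f) y‖ ≤ ‖fderiv ℝ (fderiv ℝ f) x‖ + 1 :=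
  eventually_norm_le_norm_add_one
    ((hf.fderiv_right (m := 1) (by norm_num)).fderiv_right (m := 0) (by norm_num)).continuousAt

lemma eventually_differentiableAt_of_contDiffAt_two (hf : ContDiffAt ℝ 2 f x) :
    ∀ᶠ y in 𝓝 x, DifferentiableAt ℝ f y :=
  (hf.eventually (by decide)).mono fun _ h => h.differentiableAt two_ne_zero

lemma fderiv_fderiv_apply_eq_secondDerivAlong (hf : ContDiffAt ℝ 2 f x) (v : X) :
    fderiv ℝ (fun y => fderiv ℝ f y v) x v = secondDerivAlong f x v := by
  rw [fderiv_clm_apply (differentiableAt_fderiv_of_contDiffAt_two hf) (differentiableAt_const v)]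
  simp [secondDerivAlong]

lemma secondDerivAlong_congr (h : f =ᶠ[𝓝 x] g) (v : X) :
    secondDerivAlong f x v = secondDerivAlong g x v := by
  rw [secondDerivAlong, h.fderiv.fderiv_eq, secondDerivAlong]

lemma secondDerivAlong_add_const (f : X → Y) (c : Y) (x v : X) :
    secondDerivAlong (fun y => f y + c) x v = secondDerivAlong f x v := by
  have hfderiv : fderiv ℝ (fun y => f y + c) = fderiv ℝ f := funext fun _ => fderiv_add_const c
  rw [secondDerivAlong, hfderiv, secondDerivAlong]

lemma secondDerivAlong_sub (hf : ContDiffAt ℝ 2 f x) (hg : ContDiffAt ℝ 2 g x) (v : X) :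
    secondDerivAlong (fun y => f y - g y) x v =
      secondDerivAlong f x v - secondDerivAlong g x v := by
  have hfderiv : fderiv ℝ (fun y => f y - g y) =ᶠ[𝓝 x] fun y => fderiv ℝ f y - fderiv ℝ g y := by
    filter_upwards [eventually_differentiableAt_of_contDiffAt_two hf,
      eventually_differentiableAt_of_contDiffAt_two hg] with y hfy hgy
    exact fderiv_fun_sub hfy hgy
  rw [secondDerivAlong, hfderiv.fderiv_eq,
    fderiv_fun_sub (differentiableAt_fderiv_of_contDiffAt_two hf)
      (differentiableAt_fderiv_of_contDiffAt_two hg)]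
  rfl

lemma norm_secondDerivAlong_le (f : X → Y) (x v : X) :
    ‖secondDerivAlong f x v‖ ≤ ‖fderiv ℝ (fderiv ℝ f) x‖ * ‖v‖ ^ 2 :=
  ((fderiv ℝ (fderiv ℝ f) x).le_opNorm₂ v v).trans_eq (by ring)

end NormedSpace

lemma secondDerivAlong_comp {f : X → ℝ} {x : X} (hf : ContDiffAt ℝ 2 f x) {Φ Φ' : ℝ → ℝ} {c : ℝ}
    (hΦ : ∀ᶠ t in 𝓝 (f x), HasDerivAt Φ (Φ' t) t) (hΦ' : HasDerivAt Φ' c (f x)) (v : X) :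
    secondDerivAlong (fun y => Φ (f y)) x v =
      c * fderiv ℝ f x v ^ 2 + Φ' (f x) * secondDerivAlong f x v := by
  have hfderiv : fderiv ℝ (fun y => Φ (f y)) =ᶠ[𝓝 x] fun y => Φ' (f y) • fderiv ℝ f y := by
    filter_upwards [hf.continuousAt.eventually hΦ,
      eventually_differentiableAt_of_contDiffAt_two hf] with y hΦy hfy
    exact (hΦy.comp_hasFDerivAt y hfy.hasFDerivAt).fderiv
  have hΦ'f : HasFDerivAt (fun y => Φ' (f y)) (c • fderiv ℝ f x) x :=
    hΦ'.comp_hasFDerivAt x (hf.differentiableAt two_ne_zero).hasFDerivAt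
  rw [secondDerivAlong, hfderiv.fderiv_eq,
    (hΦ'f.fun_smul (differentiableAt_fderiv_of_contDiffAt_two hf).hasFDerivAt).fderiv]
  simp only [secondDerivAlong, add_apply, smul_apply, smul_eq_mul,
    ContinuousLinearMap.smulRight_apply]
  ring

section InnerProductSpace

variable [NormedAddCommGroup Y] [InnerProductSpace ℝ Y] {w : X → Y} {x : X}

lemma fderiv_norm_sq_comp_apply (hw : DifferentiableAt ℝ w x) (v : X) :
    fderiv ℝ (fun y => ‖w y‖ ^ 2) x v = 2 * inner ℝ (w x) (fderiv ℝ w x v) := by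
  rw [hw.hasFDerivAt.norm_sq.fderiv]
  simp

lemma secondDerivAlong_norm_sq (hw : ContDiffAt ℝ 2 w x) (v : X) :
    secondDerivAlong (fun y => ‖w y‖ ^ 2) x v =
      2 * ‖fderiv ℝ w x v‖ ^ 2 + 2 * inner ℝ (w x) (secondDerivAlong w x v) := by
  have hfderiv : (fun y => fderiv ℝ (fun y => ‖w y‖ ^ 2) y v) =ᶠ[𝓝 x]
      fun y => 2 * inner ℝ (w y) (fderiv ℝ w y v) :=
    (eventually_differentiableAt_of_contDiffAt_two hw).mono fun y hy =>
      fderiv_norm_sq_comp_apply hy v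
  have hw₁ : DifferentiableAt ℝ w x := hw.differentiableAt two_ne_zero
  have hw₂ : DifferentiableAt ℝ (fun y => fderiv ℝ w y v) x :=
    (differentiableAt_fderiv_of_contDiffAt_two hw).clm_apply (differentiableAt_const v)
  rw [← fderiv_fderiv_apply_eq_secondDerivAlong (hw.norm_sq ℝ), hfderiv.fderiv_eq,
    fderiv_const_mul (hw₁.inner ℝ hw₂), smul_apply, smul_eq_mul, fderiv_inner_apply ℝ hw₁ hw₂,
    fderiv_fderiv_apply_eq_secondDerivAlong hw, real_inner_self_eq_norm_sq]
  ring

end InnerProductSpace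

end SecondDerivative

section ApproxSqDist

variable {X F : Type*} [NormedAddCommGroup X] [InnerProductSpace ℝ X]
  [NormedAddCommGroup F] [InnerProductSpace ℝ F]

/-- `f` behaves at `x` like the squared distance to a submanifold of dimension `m - 2`, up to
relative errors of the order of the distance `√(f x)`: the gradient has length about `2 √(f x)`, and
the trace of the Hessian on any `m`-dimensional subspace is at least about `4`. -/
structure IsApproxSqDistAt (m : ℕ) (C : ℝ) (f : X → ℝ) (x : X) : Prop where
  contDiffAt : ContDiffAt ℝ 2 f x
  nonneg : 0 ≤ f x
  norm_fderiv_le : ‖fderiv ℝ f x‖ ≤ 2 * √(f x) + C * f x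
  le_sum_secondDerivAlong : ∀ v : Fin m → X, Orthonormal ℝ v →
    4 - C * √(f x) ≤ ∑ i, secondDerivAlong f x (v i)

section PointwiseEstimates

variable {w : X → X} {x : X} (K : Submodule ℝ X) [FiniteDimensional ℝ K] {B : ℝ}

lemma norm_fderiv_norm_sq_le (hw : DifferentiableAt ℝ w x)
    (hK : ‖fderiv ℝ w x - Kᗮ.starProjection‖ ≤ B * ‖w x‖) :
    ‖fderiv ℝ (fun y => ‖w y‖ ^ 2) x‖ ≤ 2 * ‖w x‖ + 2 * B * ‖w x‖ ^ 2 := by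
  have hfderiv : ‖fderiv ℝ w x‖ ≤ 1 + B * ‖w x‖ := by
    linarith [norm_le_norm_add_norm_sub' (fderiv ℝ w x) Kᗮ.starProjection,
      Kᗮ.starProjection_norm_le]
  have hBw : 0 ≤ B * ‖w x‖ := (norm_nonneg _).trans hK
  refine ContinuousLinearMap.opNorm_le_bound _ (by nlinarith [norm_nonneg (w x)]) fun v => ?_
  calc ‖fderiv ℝ (fun y => ‖w y‖ ^ 2) x v‖
      = 2 * |inner ℝ (w x) (fderiv ℝ w x v)| := by
        rw [fderiv_norm_sq_comp_apply hw, Real.norm_eq_abs, abs_mul, abs_two]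
    _ ≤ 2 * (‖w x‖ * ((1 + B * ‖w x‖) * ‖v‖)) := by
        gcongr
        exact (abs_real_inner_le_norm _ _).trans
          (by gcongr; exact (fderiv ℝ w x).le_of_opNorm_le hfderiv v)
    _ = (2 * ‖w x‖ + 2 * B * ‖w x‖ ^ 2) * ‖v‖ := by ring

lemma le_secondDerivAlong_norm_sq (hw : ContDiffAt ℝ 2 w x)
    (hK : ‖fderiv ℝ w x - Kᗮ.starProjection‖ ≤ B * ‖w x‖)
    (hB : ‖fderiv ℝ (fderiv ℝ w) x‖ ≤ B) {v : X} (hv : ‖v‖ = 1) :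
    2 * ‖Kᗮ.starProjection v‖ ^ 2 - 6 * B * ‖w x‖ ≤ secondDerivAlong (fun y => ‖w y‖ ^ 2) x v := by
  have hproj : ‖Kᗮ.starProjection v‖ ≤ 1 := (Kᗮ.norm_starProjection_apply_le v).trans_eq hv
  have hdiff : ‖Kᗮ.starProjection v‖ - B * ‖w x‖ ≤ ‖fderiv ℝ w x v‖ := by
    have := (fderiv ℝ w x - Kᗮ.starProjection).le_of_opNorm_le hK v
    rw [sub_apply, hv, mul_one] at this
    linarith [norm_le_norm_add_norm_sub (fderiv ℝ w x v) (Kᗮ.starProjection v)]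
  have hfirst : ‖Kᗮ.starProjection v‖ ^ 2 - 2 * B * ‖w x‖ ≤ ‖fderiv ℝ w x v‖ ^ 2 := by
    have hBw : 0 ≤ B * ‖w x‖ := (norm_nonneg _).trans hK
    nlinarith [norm_nonneg (Kᗮ.starProjection v), norm_nonneg (fderiv ℝ w x v),
      sq_nonneg (‖fderiv ℝ w x v‖ - ‖Kᗮ.starProjection v‖)]
  have hsecond : -(B * ‖w x‖) ≤ inner ℝ (w x) (secondDerivAlong w x v) := by
    have hle : ‖secondDerivAlong w x v‖ ≤ B := by
      simpa [hv] using (norm_secondDerivAlong_le w x v).trans (by simpa [hv] using hB)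
    refine (abs_le.1 ((abs_real_inner_le_norm _ _).trans ?_)).1
    rw [mul_comm]
    gcongr
  rw [secondDerivAlong_norm_sq hw]
  linarith

lemma isApproxSqDistAt_norm_sq (hw : ContDiffAt ℝ 2 w x)
    (hK : ‖fderiv ℝ w x - Kᗮ.starProjection‖ ≤ B * ‖w x‖)
    (hB : ‖fderiv ℝ (fderiv ℝ w) x‖ ≤ B) {m : ℕ} (hm : Module.finrank ℝ K + 2 ≤ m) :
    IsApproxSqDistAt m (6 * m * B) (fun y => ‖w y‖ ^ 2) x where
  contDiffAt := hw.norm_sq ℝ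
  nonneg := by positivity
  norm_fderiv_le := by
    have hB₀ : 0 ≤ B := (norm_nonneg (fderiv ℝ (fderiv ℝ w) x)).trans hB
    have hm₁ : (1 : ℝ) ≤ m := by exact_mod_cast (by lia : 1 ≤ m)
    rw [Real.sqrt_sq (norm_nonneg _)]
    refine (norm_fderiv_norm_sq_le K (hw.differentiableAt two_ne_zero) hK).trans ?_
    gcongr
    linarith
  le_sum_secondDerivAlong v hv := by
    have htrace := card_sub_finrank_le_sum_sq_norm_starProjection K hv
    have hcodim : (2 : ℝ) ≤ m - Module.finrank ℝ K := by
      have : (Module.finrank ℝ K + 2 : ℝ) ≤ m := by exact_mod_cast hm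
      linarith
    rw [Fintype.card_fin] at htrace
    rw [Real.sqrt_sq (norm_nonneg _)]
    calc 4 - 6 * m * B * ‖w x‖
        ≤ 2 * ∑ i, ‖Kᗮ.starProjection (v i)‖ ^ 2 - m * (6 * B * ‖w x‖) := by linarith
      _ = ∑ i, (2 * ‖Kᗮ.starProjection (v i)‖ ^ 2 - 6 * B * ‖w x‖) := by
        simp [Finset.sum_sub_distrib, Finset.mul_sum]
      _ ≤ ∑ i, secondDerivAlong (fun y => ‖w y‖ ^ 2) x (v i) :=
        Finset.sum_le_sum fun i _ => le_secondDerivAlong_norm_sq K hw hK hB (hv.1 i)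

end PointwiseEstimates

open ContinuousLinearMap

/-- The Gauss–Newton step for the equation `g = 0`: to first order, the displacement from the
nearest zero of `g` to `x`. -/
def newtonStep [CompleteSpace X] [CompleteSpace F] (g : X → F) (x : X) : X :=
  pseudoinverse (fderiv ℝ g x) (g x)

section NewtonStep

variable [CompleteSpace X] [CompleteSpace F] {g : X → F} {x : X}

lemma contDiffAt_pseudoinverse_fderiv {m n : WithTop ℕ∞} (hg : ContDiffAt ℝ n g x)
    (hx : IsUnit (fderiv ℝ g x ∘L adjoint (fderiv ℝ g x))) (hmn : m + 1 ≤ n) :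
    ContDiffAt ℝ m (fun y => pseudoinverse (fderiv ℝ g y)) x :=
  (contDiffAt_pseudoinverse hx).comp x (hg.fderiv_right hmn)

lemma contDiffAt_newtonStep {m n : WithTop ℕ∞} (hg : ContDiffAt ℝ n g x)
    (hx : IsUnit (fderiv ℝ g x ∘L adjoint (fderiv ℝ g x))) (hmn : m + 1 ≤ n) :
    ContDiffAt ℝ m (newtonStep g) x :=
  (contDiffAt_pseudoinverse_fderiv hg hx hmn).clm_apply (hg.of_le (le_self_add.trans hmn))

lemma fderiv_apply_newtonStep (hx : IsUnit (fderiv ℝ g x ∘L adjoint (fderiv ℝ g x))) :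
    fderiv ℝ g x (newtonStep g x) = g x :=
  apply_pseudoinverse_apply hx _

lemma newtonStep_eq_zero_iff (hx : IsUnit (fderiv ℝ g x ∘L adjoint (fderiv ℝ g x))) :
    newtonStep g x = 0 ↔ g x = 0 :=
  ⟨fun h => by rw [← fderiv_apply_newtonStep hx, h, map_zero],
    fun h => by rw [newtonStep, h, map_zero]⟩

lemma norm_fderiv_newtonStep_sub_starProjection_le (hg : ContDiffAt ℝ 2 g x)
    (hx : IsUnit (fderiv ℝ g x ∘L adjoint (fderiv ℝ g x))) :
    ‖fderiv ℝ (newtonStep g) x - (fderiv ℝ g x).kerᗮ.starProjection‖ ≤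
      ‖fderiv ℝ (fun y => pseudoinverse (fderiv ℝ g y)) x‖ * ‖fderiv ℝ g x‖ * ‖newtonStep g x‖ := by
  have hR : DifferentiableAt ℝ (fun y => pseudoinverse (fderiv ℝ g y)) x :=
    (contDiffAt_pseudoinverse_fderiv (m := 1) hg hx (by norm_num)).differentiableAt one_ne_zero
  have hfderiv : fderiv ℝ (newtonStep g) x - (fderiv ℝ g x).kerᗮ.starProjection =
      (fderiv ℝ (fun y => pseudoinverse (fderiv ℝ g y)) x).flip (g x) := by
    rw [← pseudoinverse_comp_self hx, sub_eq_iff_eq_add']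
    exact fderiv_clm_apply hR (hg.differentiableAt two_ne_zero)
  rw [hfderiv, mul_assoc]
  refine (le_opNorm _ _).trans ?_
  rw [opNorm_flip]
  gcongr
  exact (fderiv_apply_newtonStep hx ▸ le_opNorm _ _ : ‖g x‖ ≤ _)

end NewtonStep

variable [FiniteDimensional ℝ F] {g : X → F} {p : X}

lemma eventually_isUnit_fderiv_comp_adjoint [CompleteSpace X] (hg : ContDiffAt ℝ 1 g p)
    (hsurj : Function.Surjective (fderiv ℝ g p)) :
    ∀ᶠ x in 𝓝 p, IsUnit (fderiv ℝ g x ∘L adjoint (fderiv ℝ g x)) :=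
  (hg.fderiv_right (m := 0) (by simp)).continuousAt.eventually
    (eventually_isUnit_comp_adjoint (isUnit_comp_adjoint_iff_surjective.2 hsurj))

lemma exists_eventually_isApproxSqDistAt_newtonStep [FiniteDimensional ℝ X]
    (hg : ContDiffAt ℝ 3 g p) (hsurj : Function.Surjective (fderiv ℝ g p)) {m : ℕ}
    (hm : Module.finrank ℝ X + 2 ≤ m + Module.finrank ℝ F) :
    ∃ C ≥ 0, ∀ᶠ x in 𝓝 p, IsApproxSqDistAt m C (fun y => ‖newtonStep g y‖ ^ 2) x := by
  have hunit := isUnit_comp_adjoint_iff_surjective.2 hsurj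
  have hw : ContDiffAt ℝ 2 (newtonStep g) p := contDiffAt_newtonStep hg hunit (by norm_num)
  have hR : ContDiffAt ℝ 2 (fun y => pseudoinverse (fderiv ℝ g y)) p :=
    contDiffAt_pseudoinverse_fderiv hg hunit (by norm_num)
  have hD_pinv := eventually_norm_le_norm_add_one
    (differentiableAt_fderiv_of_contDiffAt_two hR).continuousAt
  have hDg := eventually_norm_le_norm_add_one
    (hg.fderiv_right (m := 0) (by norm_num)).continuousAt
  have hDDw := eventually_norm_fderiv_fderiv_le hw
  set b₁ := ‖fderiv ℝ (fun y => pseudoinverse (fderiv ℝ g y)) p‖ + 1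
  set b₂ := ‖fderiv ℝ g p‖ + 1
  set b₃ := ‖fderiv ℝ (fderiv ℝ (newtonStep g)) p‖ + 1
  have hb₁ : 0 ≤ b₁ := by positivity
  have hb₂ : 0 ≤ b₂ := by positivity
  have hb₃ : 0 ≤ b₃ := by positivity
  refine ⟨6 * m * (b₁ * b₂ + b₃), by positivity, ?_⟩
  filter_upwards [eventually_isUnit_fderiv_comp_adjoint (hg.of_le (by norm_num)) hsurj,
    hg.eventually (by decide), hD_pinv, hDg, hDDw] with x hx hgx h₁ h₂ h₃
  have hrank := (fderiv ℝ g x).toLinearMap.finrank_range_add_finrank_ker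
  rw [LinearMap.range_eq_top.2 (isUnit_comp_adjoint_iff_surjective.1 hx), finrank_top] at hrank
  refine isApproxSqDistAt_norm_sq (fderiv ℝ g x).ker
    (contDiffAt_newtonStep hgx hx (by norm_num)) ?_ (h₃.trans (by nlinarith)) (by lia)
  refine (norm_fderiv_newtonStep_sub_starProjection_le (hgx.of_le (by norm_num)) hx).trans ?_
  gcongr
  exact (mul_le_mul h₁ h₂ (norm_nonneg _) hb₁).trans (le_add_of_nonneg_right hb₃)

end ApproxSqDist

section Submanifold

lemma exists_eventually_norm_le_mul_infDist {X F : Type*} [PseudoMetricSpace X]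
    [SeminormedAddCommGroup F] {w : X → F} {s E : Set X} {p : X} {L : NNReal} (hs : s ∈ 𝓝 p)
    (hw : LipschitzOnWith L w s) (hp : p ∈ E) (hE : ∀ᶠ x in 𝓝 p, x ∈ E → w x = 0) :
    ∃ K > 0, ∀ᶠ x in 𝓝 p, ‖w x‖ ≤ K * infDist x E := by
  obtain ⟨r, hr, hball⟩ := Metric.mem_nhds_iff.1 (inter_mem hs hE)
  refine ⟨L + 1, by positivity, ?_⟩
  filter_upwards [ball_mem_nhds p (half_pos hr)] with x hx
  rw [mem_ball, dist_comm] at hx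
  have hxs : x ∈ s := (hball (mem_ball'.2 (by linarith))).1
  rw [← infDist_inter_closedBall_of_mem hp, ← div_le_iff₀' (by positivity)]
  have hne : (E ∩ closedBall x (dist p x)).Nonempty := ⟨p, hp, mem_closedBall.2 le_rfl⟩
  refine (le_infDist hne).2 fun y hy => ?_
  have hyp : dist y p < r := by
    linarith [dist_triangle y x p, mem_closedBall.1 hy.2, dist_comm x p]
  have hlip := hw.dist_le_mul x hxs y (hball (mem_ball.2 hyp)).1
  rw [(hball (mem_ball.2 hyp)).2 hy.1, dist_zero_right] at hlip
  rw [div_le_iff₀' (by positivity)]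
  nlinarith [dist_nonneg (x := x) (y := y)]

/-- Near `p`, the set `E` is the zero set of a `C³` submersion to `ℝᵈ`; that is, near `p` it is a
submanifold of codimension `d` and class `C³`. -/
def IsC3SubmanifoldAt {X : Type*} [NormedAddCommGroup X] [NormedSpace ℝ X] (d : ℕ) (E : Set X)
    (p : X) : Prop :=
  ∃ g : X → En d, ContDiffAt ℝ 3 g p ∧ Function.Surjective (fderiv ℝ g p) ∧
    ∀ᶠ x in 𝓝 p, (g x = 0 ↔ x ∈ E)

lemma IsC3SubmanifoldAt.frequently_notMem {X : Type*} [NormedAddCommGroup X] [NormedSpace ℝ X]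
    {d : ℕ} {E : Set X} {p : X} (hE : IsC3SubmanifoldAt d E p) (hd : 0 < d) :
    ∃ᶠ x in 𝓝 p, x ∉ E := by
  obtain ⟨g, -, hsurj, hgE⟩ := hE
  intro hmem
  have hg : g =ᶠ[𝓝 p] fun _ => 0 := by
    filter_upwards [hgE, hmem] with x hx hxE
    exact hx.2 (not_not.1 hxE)
  rw [hg.fderiv_eq, fderiv_const_apply] at hsurj
  obtain ⟨v, hv⟩ := hsurj (EuclideanSpace.single ⟨0, hd⟩ 1)
  simpa using congr($hv ⟨0, hd⟩)

lemma IsC3SubmanifoldAt.exists_isApproxSqDistAt {X : Type*} [NormedAddCommGroup X]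
    [InnerProductSpace ℝ X] [FiniteDimensional ℝ X] {d : ℕ} {E : Set X} {p : X}
    (hE : IsC3SubmanifoldAt d E p) (hp : p ∈ E) {m : ℕ} (hm : Module.finrank ℝ X + 2 ≤ m + d) :
    ∃ (f : X → ℝ) (C K : ℝ), 0 ≤ C ∧ 0 < K ∧ ∀ᶠ x in 𝓝 p,
      IsApproxSqDistAt m C f x ∧ (f x = 0 ↔ x ∈ E) ∧ √(f x) ≤ K * infDist x E := by
  obtain ⟨g, hg, hsurj, hgE⟩ := hE
  have hunit := eventually_isUnit_fderiv_comp_adjoint (hg.of_le (by norm_num)) hsurj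
  have hwE : ∀ᶠ x in 𝓝 p, (newtonStep g x = 0 ↔ x ∈ E) := by
    filter_upwards [hgE, hunit] with x hxE hx
    rw [newtonStep_eq_zero_iff hx, hxE]
  obtain ⟨L, s, hs, hlip⟩ := (contDiffAt_newtonStep (m := 1) hg hunit.self_of_nhds
    (by norm_num)).exists_lipschitzOnWith
  obtain ⟨K, hK, hdist⟩ :=
    exists_eventually_norm_le_mul_infDist hs hlip hp (hwE.mono fun _ h => h.2)
  obtain ⟨C, hC, hf⟩ := exists_eventually_isApproxSqDistAt_newtonStep hg hsurj (m := m)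
    (by simpa using hm)
  refine ⟨fun x => ‖newtonStep g x‖ ^ 2, C, K, hC, hK, ?_⟩
  filter_upwards [hwE, hdist, hf] with x hxE hxdist hxf
  refine ⟨hxf, by simpa using hxE, ?_⟩
  rwa [Real.sqrt_sq (norm_nonneg _)]

section Charts

variable {n : ℕ} (k : ℕ)

/-- The projection of `ℝⁿ` onto its coordinates with (zero-based) index at least `k`, whose kernel
is the coordinate subspace used by the charts of `IsSmoothClosedSubmanifold`. -/
def tailCoords : En n →L[ℝ] En (n - k) :=
  (PiLp.continuousLinearEquiv 2 ℝ fun _ => ℝ).symm.toContinuousLinearMap ∘L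
    ContinuousLinearMap.pi fun j : Fin (n - k) => EuclideanSpace.proj ⟨k + j, by lia⟩

lemma tailCoords_apply (z : En n) (j : Fin (n - k)) : tailCoords k z j = z ⟨k + j, by lia⟩ := rfl

lemma tailCoords_eq_zero_iff (z : En n) :
    tailCoords k z = 0 ↔ ∀ i : Fin n, k ≤ (i : ℕ) → z i = 0 := by
  refine ⟨fun h i hi => ?_, fun h => PiLp.ext fun j => h _ (Nat.le_add_right k j)⟩
  have := congr($h ⟨i - k, by lia⟩)
  simpa [tailCoords_apply, Nat.add_sub_cancel' hi] using this

lemma tailCoords_surjective : Function.Surjective (tailCoords k : En n →L[ℝ] En (n - k)) := by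
  intro y
  refine ⟨WithLp.toLp 2 fun i => if h : k ≤ (i : ℕ) then y ⟨i - k, by lia⟩ else 0, ?_⟩
  ext j
  simp [tailCoords_apply]

variable {k}

lemma surjective_fderiv_of_eventually_rightInverse {X Y : Type*} [NormedAddCommGroup X]
    [NormedSpace ℝ X] [NormedAddCommGroup Y] [NormedSpace ℝ Y] {φ : X → Y} {ψ : Y → X} {y : Y}
    (hφ : DifferentiableAt ℝ φ (ψ y)) (hψ : DifferentiableAt ℝ ψ y)
    (h : ∀ᶠ z in 𝓝 y, φ (ψ z) = z) : Function.Surjective (fderiv ℝ φ (ψ y)) := by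
  have hcomp : fderiv ℝ φ (ψ y) ∘L fderiv ℝ ψ y = ContinuousLinearMap.id ℝ Y :=
    (hφ.hasFDerivAt.comp y hψ.hasFDerivAt).unique ((hasFDerivAt_id y).congr_of_eventuallyEq h)
  exact fun v => ⟨fderiv ℝ ψ y v, DFunLike.congr_fun hcomp v⟩

lemma isC3SubmanifoldAt_of_isSmoothClosedSubmanifold {E : Set (En n)}
    (hE : IsSmoothClosedSubmanifold k E) {p : En n} (hp : p ∈ E) :
    IsC3SubmanifoldAt (n - k) E p := by
  obtain ⟨U, V, φ, ψ, hU, hV, hpU, hφ, hψ, hφUV, -, hψφ, hφψ, himage⟩ := hE.2 p hp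
  have hφp : ContDiffAt ℝ 3 φ p :=
    contDiffAt_infty.1 (hφ.contDiffAt (hU.mem_nhds hpU)) 3
  have hψp : DifferentiableAt ℝ ψ (φ p) :=
    (hψ.contDiffAt (hV.mem_nhds (hφUV hpU))).differentiableAt (by simp)
  have hφ_diff : DifferentiableAt ℝ φ p := hφp.differentiableAt (by norm_num)
  refine ⟨tailCoords k ∘ φ, (tailCoords k).contDiff.contDiffAt.comp p hφp, ?_, ?_⟩
  · rw [((tailCoords k).hasFDerivAt.comp p hφ_diff.hasFDerivAt).fderiv]
    refine (tailCoords_surjective k).comp ?_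
    have := surjective_fderiv_of_eventually_rightInverse (y := φ p) (by rwa [hψφ p hpU]) hψp
      (mem_of_superset (hV.mem_nhds (hφUV hpU)) hφψ)
    rwa [hψφ p hpU] at this
  · filter_upwards [hU.mem_nhds hpU] with x hx
    rw [Function.comp_apply, tailCoords_eq_zero_iff]
    refine ⟨fun h => ?_, fun hxE => (himage.subset ⟨x, ⟨hxE, hx⟩, rfl⟩).2⟩
    obtain ⟨y, ⟨hyE, hyU⟩, hy⟩ := himage.superset ⟨hφUV hx, h⟩
    rwa [← hψφ x hx, ← hy, hψφ y hyU]

end Charts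

end Submanifold

section Barrier

/-- The barrier as a function of the squared distance `t`: at distance `s = √t` its value is
`e s + 2 α log s`. -/
def barrier (e α t : ℝ) : ℝ := e * √t + α * Real.log t

variable {e α t : ℝ}

lemma contDiffAt_barrier {m : WithTop ℕ∞} (ht : t ≠ 0) : ContDiffAt ℝ m (barrier e α) t :=
  (contDiffAt_const.mul (Real.contDiffAt_sqrt ht)).add
    (contDiffAt_const.mul (Real.contDiffAt_log.2 ht))

lemma hasDerivAt_barrier (ht : t ≠ 0) :
    HasDerivAt (barrier e α) (e / (2 * √t) + α / t) t := by
  have := ((Real.hasDerivAt_sqrt ht).const_mul e).add ((Real.hasDerivAt_log ht).const_mul α)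
  rwa [mul_one_div, ← div_eq_mul_inv] at this

lemma hasDerivAt_deriv_barrier (ht : 0 < t) :
    HasDerivAt (fun t => e / (2 * √t) + α / t) (-(e / (4 * √t ^ 3)) - α / t ^ 2) t := by
  have hsqrt := (hasDerivAt_const t e).div ((Real.hasDerivAt_sqrt ht.ne').const_mul 2)
    (by positivity)
  have hinv := (hasDerivAt_const t α).div (hasDerivAt_id t) ht.ne'
  refine (hsqrt.add hinv).congr_deriv ?_
  simp only [id]
  field_simp
  ring

/-- The terms of order `α s⁻²` cancel; those of order `α s⁻¹` are absorbed by `e s⁻¹`. -/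
lemma lt_barrier_derivative_bound {s C M Q S : ℝ} (hs : 0 < s) (he : 0 ≤ e) (hα : 0 ≤ α)
    (hC : 0 ≤ C) (hsC : s * C ≤ 1) (hαC : 12 * C * α ≤ e) (hsM : s * (4 * e * C + 2 * M) < e)
    (hQ : Q ≤ (2 * s + C * s ^ 2) ^ 2) (hS : 4 - C * s ≤ S) :
    M < (-(e / (4 * s ^ 3)) - α / (s ^ 2) ^ 2) * Q + (e / (2 * s) + α / s ^ 2) * S := by
  have hCs : (C * s) ^ 2 ≤ C * s := by nlinarith [mul_nonneg hC hs.le]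
  have he_sq : e * (C * s) ^ 2 ≤ e * (C * s) := by gcongr
  have hα_sq : α * (C * (C * s)) ≤ α * C := by
    gcongr
    nlinarith
  calc M < (e - 3 / 2 * (e * (C * s)) - e * (C * s) ^ 2 / 4 - α * (5 * C + C * (C * s))) / s := by
        rw [lt_div_iff₀ hs]
        nlinarith [mul_nonneg he (mul_nonneg hC hs.le)]
    _ = (-(e / (4 * s ^ 3)) - α / (s ^ 2) ^ 2) * (2 * s + C * s ^ 2) ^ 2 +
        (e / (2 * s) + α / s ^ 2) * (4 - C * s) := by
        field_simp
        ring
    _ ≤ (-(e / (4 * s ^ 3)) - α / (s ^ 2) ^ 2) * Q + (e / (2 * s) + α / s ^ 2) * S := by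
        refine add_le_add (mul_le_mul_of_nonpos_left hQ ?_) (by gcongr)
        have : 0 ≤ e / (4 * s ^ 3) + α / (s ^ 2) ^ 2 := by positivity
        linarith

variable {X : Type*} [NormedAddCommGroup X] [InnerProductSpace ℝ X] {m : ℕ} {C M : ℝ} {f : X → ℝ}
  {x : X}

lemma IsApproxSqDistAt.lt_sum_secondDerivAlong_barrier [CompleteSpace X]
    (hf : IsApproxSqDistAt m C f x) (hfx : 0 < f x) (he : 0 ≤ e) (hα : 0 ≤ α) (hC : 0 ≤ C)
    (hsC : √(f x) * C ≤ 1) (hαC : 12 * C * α ≤ e) (hsM : √(f x) * (4 * e * C + 2 * M) < e)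
    {v : Fin m → X} (hv : Orthonormal ℝ v) :
    M < ∑ i, secondDerivAlong (fun y => barrier e α (f y)) x (v i) := by
  have hsq : f x = √(f x) ^ 2 := (Real.sq_sqrt hfx.le).symm
  have hgrad : ∑ i, fderiv ℝ f x (v i) ^ 2 ≤ (2 * √(f x) + C * √(f x) ^ 2) ^ 2 :=
    (sum_sq_apply_le_sq_norm hv _).trans
      (by rw [← hsq]; gcongr; exact hf.norm_fderiv_le)
  have hbarrier : ∀ᶠ t in 𝓝 (f x), HasDerivAt (barrier e α) (e / (2 * √t) + α / t) t :=
    (eventually_ne_nhds hfx.ne').mono fun t => hasDerivAt_barrier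
  simp only [secondDerivAlong_comp hf.contDiffAt hbarrier (hasDerivAt_deriv_barrier hfx),
    Finset.sum_add_distrib, ← Finset.mul_sum]
  have := lt_barrier_derivative_bound (Real.sqrt_pos.2 hfx) he hα hC hsC hαC hsM hgrad
    (hf.le_sum_secondDerivAlong v hv)
  rwa [← hsq] at this

end Barrier

lemma sum_secondDerivAlong_le {X : Type*} [NormedAddCommGroup X] [NormedSpace ℝ X] {m : ℕ}
    (ζ : X → ℝ) (x : X) {v : Fin m → X} (hv : ∀ i, ‖v i‖ = 1) :
    ∑ i, secondDerivAlong ζ x (v i) ≤ m * ‖fderiv ℝ (fderiv ℝ ζ) x‖ := by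
  have hle (i : Fin m) : secondDerivAlong ζ x (v i) ≤ ‖fderiv ℝ (fderiv ℝ ζ) x‖ :=
    (Real.le_norm_self _).trans (by simpa [hv i] using norm_secondDerivAlong_le ζ x (v i))
  simpa using Finset.sum_le_card_nsmul Finset.univ _ _ fun i _ => hle i

section Viscosity

open scoped Matrix

variable {n m : ℕ}

lemma sum_ite_val_lt {A : Type*} [AddCommMonoid A] (hm : m ≤ n) (a : Fin n → A) :
    (∑ i : Fin n, if (i : ℕ) < m then a i else 0) = ∑ i : Fin m, a (Fin.castLE hm i) := by
  obtain ⟨d, rfl⟩ := Nat.exists_eq_add_of_le hm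
  have hcast : Fin.castLE hm = Fin.castAdd d := rfl
  simp [Fin.sum_univ_add, hcast]

lemma exists_orthonormal_sumSmallestEigs_eq (hm : m ≤ n) {M : Matrix (Fin n) (Fin n) ℝ}
    (hM : M.IsHermitian) : ∃ v : Fin m → En n, Orthonormal ℝ v ∧
      sumSmallestEigs m M = ∑ i, (v i).ofLp ⬝ᵥ (M *ᵥ (v i).ofLp) := by
  refine ⟨fun i => hM.eigenvectorBasis (Tuple.sort hM.eigenvalues (Fin.castLE hm i)),
    hM.eigenvectorBasis.orthonormal.comp _
      ((Tuple.sort hM.eigenvalues).injective.comp (Fin.castLE_injective hm)), ?_⟩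
  rw [sumSmallestEigs, sum_ite_val_lt hm, sortedEigs, dif_pos hM]
  simp [hM.eigenvalues_eq]

lemma dotProduct_hess_mulVec (φ : En n → ℝ) (x v : En n) :
    v.ofLp ⬝ᵥ (hess φ x *ᵥ v.ofLp) = secondDerivAlong φ x v := by
  have hv : v = ∑ a, v a • (EuclideanSpace.single a (1 : ℝ) : En n) := by
    simpa using ((EuclideanSpace.basisFun (Fin n) ℝ).sum_repr v).symm
  conv_rhs => rw [secondDerivAlong, hv]
  simp only [map_sum, map_smul, sum_apply, smul_apply, smul_eq_mul, Finset.mul_sum, dotProduct,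
    Matrix.mulVec, hess, Matrix.of_apply, iteratedFDeriv_two_apply, Matrix.cons_val_zero,
    Matrix.cons_val_one]
  rw [Finset.sum_comm]
  exact Finset.sum_congr rfl fun a _ => Finset.sum_congr rfl fun b _ => by ring

lemma isHermitian_hess {φ : En n → ℝ} {x : En n} (hφ : ContDiffAt ℝ 2 φ x) :
    (hess φ x).IsHermitian := by
  ext i j
  simpa [hess, iteratedFDeriv_two_apply] using (hφ.isSymmSndFDerivAt (by simp)) _ _

lemma exists_contDiff_eventuallyEq_s7 {X Y : Type*} [NormedAddCommGroup X] [NormedSpace ℝ X]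
    [FiniteDimensional ℝ X] [NormedAddCommGroup Y] [NormedSpace ℝ Y]
    {φ : X → Y} {x : X} {l : ℕ} (hφ : ContDiffAt ℝ l φ x) :
    ∃ ψ : X → Y, ContDiff ℝ l ψ ∧ ψ =ᶠ[𝓝 x] φ := by
  obtain ⟨r, hr, hball⟩ := Metric.eventually_nhds_iff_ball.1 (hφ.eventually (by simp))
  let χ : ContDiffBump x := ⟨r / 4, r / 2, by positivity, by linarith⟩
  refine ⟨fun y => χ y • φ y, contDiff_iff_contDiffAt.2 fun y => ?_, ?_⟩
  · by_cases hy : y ∈ ball x r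
    · exact χ.contDiff.contDiffAt.smul (hball y hy)
    · have hy_supp : y ∉ tsupport χ := by
        rw [χ.tsupport_eq, mem_closedBall, not_le]
        exact (half_lt_self hr).trans_le (not_lt.1 hy)
      refine (contDiffAt_const (c := 0)).congr_of_eventuallyEq ?_
      filter_upwards [notMem_tsupport_iff_eventuallyEq.1 hy_supp] with z hz
      simp [hz]
  · filter_upwards [χ.eventuallyEq_one] with y hy
    simp [hy]

lemma exists_orthonormal_sum_secondDerivAlong_nonpos (hm : m ≤ n) {O : Set (En n)} {u : En n → ℝ}
    (hu : IsViscositySupersolution (fun _ _ _ M => sumSmallestEigs m M) (fun _ => 0) O u)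
    {φ : En n → ℝ} {x₀ : En n} (hx₀ : x₀ ∈ O) (hφ : ContDiffAt ℝ 2 φ x₀)
    (hmin : IsLocalMinOn (fun x => u x - φ x) O x₀) :
    ∃ v : Fin m → En n, Orthonormal ℝ v ∧ ∑ i, secondDerivAlong φ x₀ (v i) ≤ 0 := by
  obtain ⟨ψ, hψ, hψφ⟩ := exists_contDiff_eventuallyEq_s7 (l := 2) hφ
  set c := u x₀ - φ x₀ with hc
  have hψc : ContDiff ℝ 2 fun x => ψ x + c := hψ.add contDiff_const
  have htest : sumSmallestEigs m (hess (fun x => ψ x + c) x₀) ≤ 0 := by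
    refine hu _ hψc.contDiffOn x₀ hx₀ (by rw [hψφ.eq_of_nhds, hc]; ring) ?_
    filter_upwards [hmin, hψφ.filter_mono nhdsWithin_le_nhds] with x hx hψx
    rw [hψx, hψφ.eq_of_nhds]
    linarith
  obtain ⟨v, hv, hsum⟩ :=
    exists_orthonormal_sumSmallestEigs_eq hm (isHermitian_hess (hψc.contDiffAt (x := x₀)))
  refine ⟨v, hv, ?_⟩
  rw [hsum] at htest
  simpa only [dotProduct_hess_mulVec, secondDerivAlong_add_const,
    secondDerivAlong_congr hψφ] using htest

end Viscosity

section InteriorMinimum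

variable {X : Type*} [TopologicalSpace X]

lemma exists_mem_forall_le_of_lt_off_compact {W : X → ℝ} {D S : Set X} (hS : IsCompact S)
    (hW : LowerSemicontinuousOn W S) {x₁ : X} (hx₁ : x₁ ∈ D)
    (hlt : ∀ x ∈ D \ S, W x₁ < W x) : ∃ x₀ ∈ S, ∀ x ∈ D, W x₀ ≤ W x := by
  have hx₁S : x₁ ∈ S := not_not.1 fun h => (hlt x₁ ⟨hx₁, h⟩).false
  obtain ⟨x₀, hx₀, hmin⟩ := hW.exists_isMinOn ⟨x₁, hx₁S⟩ hS
  refine ⟨x₀, hx₀, fun x hx => ?_⟩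
  by_cases hxS : x ∈ S
  · exact hmin hxS
  · exact (hmin hx₁S).trans (hlt x ⟨hx, hxS⟩).le

end InteriorMinimum

section BarrierMinimum

variable {X : Type*} [PseudoMetricSpace X] {U f : X → ℝ} {O : Set X} {p : X}
  {r a e α : ℝ}

lemma lowerSemicontinuousOn_add_sq_dist_sub_barrier {S : Set X} (hU : LowerSemicontinuousOn U S)
    (hf : ContinuousOn f S) (hf₀ : ∀ x ∈ S, f x ≠ 0) :
    LowerSemicontinuousOn (fun x => U x + dist x p ^ 2 - barrier e α (f x)) S := by
  have hbarrier : ContinuousOn (fun x => barrier e α (f x)) S := fun x hx =>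
    (contDiffAt_barrier (m := 0) (hf₀ x hx)).continuousAt.comp_continuousWithinAt (hf x hx)
  have hcont : ContinuousOn (fun x => dist x p ^ 2 - barrier e α (f x)) S :=
    (by fun_prop : Continuous fun x => dist x p ^ 2).continuousOn.sub hbarrier
  simpa only [add_sub_assoc] using hU.add hcont.lowerSemicontinuousOn

lemma lt_neg_mul_log_of_lt_exp {R t : ℝ} (hα : 0 < α) (ht : 0 < t)
    (h : t < Real.exp (-(R / α))) : R < -(α * Real.log t) := by
  have hlog := (Real.log_lt_iff_lt_exp ht).2 h
  rw [← neg_div, lt_div_iff₀' hα] at hlog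
  linarith

variable [ProperSpace X]

lemma exists_isLocalMinOn_sub_barrier_of_lt (hf : ContinuousOn f (closedBall p r))
    (hf₁ : ∀ x ∈ closedBall p r, f x ≤ 1) (hO : ∀ x ∈ closedBall p r, 0 < f x ↔ x ∈ O)
    (hU : LowerSemicontinuousOn U O) (hbelow : ∀ x ∈ closedBall p r ∩ O, a + e * √(f x) ≤ U x)
    (hα : 0 < α) {x₁ : X} (hx₁ : x₁ ∈ closedBall p r ∩ O)
    (hlt : U x₁ + dist x₁ p ^ 2 - barrier e α (f x₁) < a + r ^ 2) :
    ∃ x₀ ∈ ball p r ∩ O,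
      IsLocalMinOn (fun x => U x + dist x p ^ 2 - barrier e α (f x)) O x₀ := by
  set W : X → ℝ := fun x => U x + dist x p ^ 2 - barrier e α (f x) with hW
  have hW_ge : ∀ x ∈ closedBall p r ∩ O, a + dist x p ^ 2 - α * Real.log (f x) ≤ W x :=
    fun x hx => by simp only [hW, barrier]; linarith [hbelow x hx]
  have hα_log : ∀ x ∈ closedBall p r ∩ O, 0 ≤ -(α * Real.log (f x)) := fun x hx =>
    neg_nonneg.2 (mul_nonpos_of_nonneg_of_nonpos hα.le
      (Real.log_nonpos ((hO x hx.1).2 hx.2).le (hf₁ x hx.1)))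
  set S := closedBall p r ∩ f ⁻¹' Ici (Real.exp (-(r ^ 2 / α)))
  have hS : IsCompact S := (isCompact_closedBall p r).of_isClosed_subset
    (hf.preimage_isClosed_of_isClosed isClosed_closedBall isClosed_Ici) inter_subset_left
  have hf_pos : ∀ x ∈ S, 0 < f x := fun x hx => (Real.exp_pos _).trans_le hx.2
  have hSO : S ⊆ O := fun x hx => (hO x hx.1).1 (hf_pos x hx)
  have hlt_off : ∀ x ∈ (closedBall p r ∩ O) \ S, W x₁ < W x := by
    rintro x ⟨hx, hxS⟩
    have hfx : f x < Real.exp (-(r ^ 2 / α)) := not_le.1 fun h => hxS ⟨hx.1, h⟩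
    linarith [hW_ge x hx, sq_nonneg (dist x p),
      lt_neg_mul_log_of_lt_exp hα ((hO x hx.1).2 hx.2) hfx]
  obtain ⟨x₀, hx₀, hmin⟩ := exists_mem_forall_le_of_lt_off_compact hS
    (lowerSemicontinuousOn_add_sq_dist_sub_barrier (hU.mono hSO) (hf.mono inter_subset_left)
      fun x hx => (hf_pos x hx).ne') hx₁ hlt_off
  have hx₀D : x₀ ∈ closedBall p r ∩ O := ⟨hx₀.1, hSO hx₀⟩
  have hx₀_ball : x₀ ∈ ball p r := by
    have : dist x₀ p ^ 2 < r ^ 2 := by linarith [hW_ge x₀ hx₀D, hα_log x₀ hx₀D, hmin x₁ hx₁]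
    exact lt_of_pow_lt_pow_left₀ 2 (dist_nonneg.trans (mem_closedBall.1 hx₀.1)) this
  refine ⟨x₀, ⟨hx₀_ball, hx₀D.2⟩, ?_⟩
  filter_upwards [self_mem_nhdsWithin, mem_nhdsWithin_of_mem_nhds (isOpen_ball.mem_nhds hx₀_ball)]
    with x hxO hxr
  exact hmin x ⟨ball_subset_closedBall hxr, hxO⟩

lemma exists_isLocalMinOn_sub_barrier (hr : 0 < r) (hf : ContinuousOn f (closedBall p r))
    (hf₁ : ∀ x ∈ closedBall p r, f x ≤ 1) (hO : ∀ x ∈ closedBall p r, 0 < f x ↔ x ∈ O)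
    (hU : LowerSemicontinuousOn U O) (he : 0 ≤ e)
    (hbelow : ∀ x ∈ closedBall p r ∩ O, a + e * √(f x) ≤ U x)
    (hfreq : ∀ c > a, ∃ᶠ x in 𝓝[O] p, U x < c) {α₀ : ℝ} (hα₀ : 0 < α₀) :
    ∃ α, 0 < α ∧ α ≤ α₀ ∧ ∃ x₀ ∈ ball p r ∩ O,
      IsLocalMinOn (fun x => U x + dist x p ^ 2 - barrier e α (f x)) O x₀ := by
  have hnear : ∀ᶠ x in 𝓝[O] p, x ∈ O ∧ x ∈ closedBall p r ∧ dist x p ^ 2 < r ^ 2 / 3 := by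
    refine eventually_mem_nhdsWithin.and (eventually_nhdsWithin_of_eventually_nhds ?_)
    have hdist : ContinuousAt (fun x => dist x p ^ 2) p := by fun_prop
    exact inter_mem (closedBall_mem_nhds p hr)
      (hdist.eventually_lt_const (by simpa using by positivity))
  obtain ⟨x₁, hUx₁, hx₁O, hx₁r, hx₁p⟩ :=
    ((hfreq (a + r ^ 2 / 3) (lt_add_of_pos_right a (by positivity))).and_eventually hnear).exists
  have hlog : Real.log (f x₁) ≤ 0 :=
    Real.log_nonpos ((hO x₁ hx₁r).2 hx₁O).le (hf₁ x₁ hx₁r)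
  set α := min α₀ (r ^ 2 / 3 / (1 - Real.log (f x₁)))
  have hα : 0 < α := lt_min hα₀ (div_pos (by positivity) (by linarith))
  have hα_log : α * (1 - Real.log (f x₁)) ≤ r ^ 2 / 3 :=
    (le_div_iff₀ (by linarith)).1 (min_le_right _ _)
  have hsqrt : 0 ≤ e * √(f x₁) := by positivity
  exact ⟨α, hα, min_le_left _ _, exists_isLocalMinOn_sub_barrier_of_lt hf hf₁ hO hU hbelow hα
    ⟨hx₁r, hx₁O⟩ (by rw [barrier]; linarith)⟩

end BarrierMinimum

section Contradiction

variable {n m k : ℕ} {Ω O E : Set (En n)} {p x₀ : En n} {u η ζ f : En n → ℝ} {a C M e α ε : ℝ}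

lemma not_isLocalMinOn_sub_barrier (hm : m ≤ n)
    (hu : IsViscositySupersolution (fun _ _ _ M => sumSmallestEigs m M) (fun _ => 0) O u)
    (hx₀ : x₀ ∈ O) (hζ : ContDiffAt ℝ 2 ζ x₀) (hζM : m * ‖fderiv ℝ (fderiv ℝ ζ) x₀‖ ≤ M)
    (hf : IsApproxSqDistAt m C f x₀) (hfx₀ : 0 < f x₀) (he : 0 ≤ e) (hα : 0 ≤ α) (hC : 0 ≤ C)
    (hsC : √(f x₀) * C ≤ 1) (hαC : 12 * C * α ≤ e) (hsM : √(f x₀) * (4 * e * C + 2 * M) < e) :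
    ¬ IsLocalMinOn (fun x => u x + ζ x - barrier e α (f x)) O x₀ := by
  intro hmin
  have hbarrier : ContDiffAt ℝ 2 (fun x => barrier e α (f x)) x₀ :=
    (contDiffAt_barrier hfx₀.ne').comp x₀ hf.contDiffAt
  obtain ⟨v, hv, hsum⟩ := exists_orthonormal_sum_secondDerivAlong_nonpos hm hu hx₀
    (hbarrier.sub hζ) (by simpa only [sub_sub_eq_add_sub] using hmin)
  simp only [secondDerivAlong_sub hbarrier hζ, Finset.sum_sub_distrib] at hsum
  linarith [hf.lt_sum_secondDerivAlong_barrier hfx₀ he hα hC hsC hαC hsM hv,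
    sum_secondDerivAlong_le ζ x₀ hv.1]

lemma frequently_add_lt {X : Type*} [TopologicalSpace X] {s : Set X} {p : X} {u η : X → ℝ}
    (hu : ∀ c > a, ∃ᶠ x in 𝓝[s] p, u x < c) (hη : ContinuousAt η p) :
    ∀ c > a + η p, ∃ᶠ x in 𝓝[s] p, u x + η x < c := by
  intro c hc
  obtain ⟨b, hab, hbc⟩ := exists_between (lt_sub_iff_add_lt.2 hc)
  have hη_lt : ∀ᶠ x in 𝓝[s] p, η x < c - b :=
    eventually_nhdsWithin_of_eventually_nhds (hη.eventually_lt_const (by linarith))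
  exact ((hu b hab).and_eventually hη_lt).mono fun x hx => by linarith [hx.1, hx.2]

lemma contDiff_sq_dist {V : Type*} [NormedAddCommGroup V] [InnerProductSpace ℝ V] (p : V) :
    ContDiff ℝ 2 fun x => dist x p ^ 2 := by
  simp only [dist_eq_norm]
  exact (contDiff_id.sub contDiff_const).norm_sq ℝ

lemma exists_add_lt_add_mul_sqrt {r : ℝ} (hr : 0 < r) (hm : m ≤ n)
    (hu : LowerSemicontinuousOn u O)
    (hvisc : IsViscositySupersolution (fun _ _ _ M => sumSmallestEigs m M) (fun _ => 0) O u)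
    (hfreq : ∀ c > a, ∃ᶠ x in 𝓝[O] p, u x < c) (hη : ContinuousAt η p)
    (hηO : ∀ x ∈ O, ContDiffAt ℝ 2 η x) (he : 0 < e) (hC : 0 ≤ C)
    (hf : ∀ x ∈ closedBall p r, IsApproxSqDistAt m C f x)
    (hO : ∀ x ∈ closedBall p r, 0 < f x ↔ x ∈ O) (hf₁ : ∀ x ∈ closedBall p r, f x ≤ 1)
    (hM : ∀ x ∈ closedBall p r, m * ‖fderiv ℝ (fderiv ℝ fun y => η y + dist y p ^ 2) x‖ ≤ M)
    (hsC : ∀ x ∈ closedBall p r, √(f x) * C ≤ 1)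
    (hsM : ∀ x ∈ closedBall p r, √(f x) * (4 * e * C + 2 * M) < e) :
    ∃ x ∈ closedBall p r ∩ O, u x + η x < a + η p + e * √(f x) := by
  by_contra! hbelow
  obtain ⟨α, hα, hαe, x₀, hx₀, hmin⟩ := exists_isLocalMinOn_sub_barrier (α₀ := e / (12 * C + 1)) hr
    (fun x hx => (hf x hx).contDiffAt.continuousAt.continuousWithinAt) hf₁ hO
    (hu.add (continuousOn_of_forall_continuousAt fun x hx =>
      (hηO x hx).continuousAt).lowerSemicontinuousOn)
    he.le hbelow (frequently_add_lt hfreq hη) (by positivity)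
  have hx₀r := ball_subset_closedBall hx₀.1
  have hαC : 12 * C * α ≤ e := by
    rw [le_div_iff₀ (by positivity)] at hαe
    linarith
  exact not_isLocalMinOn_sub_barrier hm hvisc hx₀.2
    ((hηO x₀ hx₀.2).add (contDiff_sq_dist p).contDiffAt) (hM x₀ hx₀r) (hf x₀ hx₀r)
    ((hO x₀ hx₀r).2 hx₀.2) he.le hα.le hC (hsC x₀ hx₀r) hαC (hsM x₀ hx₀r)
    (by simpa only [add_assoc] using hmin)

lemma exists_add_lt_add_mul_infDist (hk : k + 2 ≤ n) (hΩ : IsOpen Ω) (hpE : p ∈ E) (hpΩ : p ∈ Ω)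
    (hE : IsC3SubmanifoldAt (n - k) E p) (hu : LowerSemicontinuousOn u (Ω \ E))
    (hvisc : IsViscositySupersolution
      (fun _ _ _ M => sumSmallestEigs (k + 2) M) (fun _ => 0) (Ω \ E) u)
    (hfreq : ∀ c > a, ∃ᶠ x in 𝓝[Ω \ E] p, u x < c) (hη : ContDiffOn ℝ 2 η Ω) (hε : 0 < ε) :
    ∃ x ∈ Ω \ E, u x + η x < a + η p + ε * infDist x E := by
  obtain ⟨f, C, K, hC, hK, hf⟩ := hE.exists_isApproxSqDistAt hpE (m := k + 2)
    (by simp only [finrank_euclideanSpace, Fintype.card_fin]; lia)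
  have hfp : f p = 0 := hf.self_of_nhds.2.1.2 hpE
  have hf_cont : ContinuousAt f p := hf.self_of_nhds.1.contDiffAt.continuousAt
  have hf_lt : ∀ᶠ x in 𝓝 p, f x < 1 := hf_cont.eventually_lt_const (by simp [hfp])
  have hsmall (b : ℝ) {c : ℝ} (hc : 0 < c) : ∀ᶠ x in 𝓝 p, √(f x) * b < c :=
    (hf_cont.sqrt.mul_const b).eventually_lt_const (by simpa [hfp] using hc)
  have hη_at {x : En n} (hx : x ∈ Ω) : ContDiffAt ℝ 2 η x := hη.contDiffAt (hΩ.mem_nhds hx)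
  have hDDζ := eventually_norm_fderiv_fderiv_le ((hη_at hpΩ).add (contDiff_sq_dist p).contDiffAt)
  set M := ((k + 2 : ℕ) : ℝ) * (‖fderiv ℝ (fderiv ℝ fun x => η x + dist x p ^ 2) p‖ + 1)
  have he : 0 < ε / K := div_pos hε hK
  obtain ⟨r, hr, hball⟩ := nhds_basis_closedBall.eventually_iff.1 (hf.and (hf_lt.and (hDDζ.and
    ((hsmall C one_pos).and ((hsmall (4 * (ε / K) * C + 2 * M) he).and
      (hΩ.eventually_mem hpΩ))))))
  choose hf hf_lt hDDζ hsC hsM hΩr using fun x hx => @hball x hx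
  have hO : ∀ x ∈ closedBall p r, 0 < f x ↔ x ∈ Ω \ E := fun x hx => by
    rw [(hf x hx).1.nonneg.lt_iff_ne', ne_eq, (hf x hx).2.1, Set.mem_sdiff,
      and_iff_right (hΩr x hx)]
  obtain ⟨x, hx, hlt⟩ := exists_add_lt_add_mul_sqrt hr hk hu hvisc hfreq
    (hη_at hpΩ).continuousAt (fun x hx => hη_at hx.1) he hC (fun x hx => (hf x hx).1) hO
    (fun x hx => (hf_lt x hx).le)
    (fun x hx => mul_le_mul_of_nonneg_left (hDDζ x hx) (Nat.cast_nonneg _))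
    (fun x hx => (hsC x hx).le) hsM
  refine ⟨x, hx.2, hlt.trans_le ((add_le_add_iff_left _).2 ?_)⟩
  calc ε / K * √(f x) ≤ ε / K * (K * infDist x E) := by gcongr; exact (hf x hx.1).2.2
    _ = ε * infDist x E := by field_simp

end Contradiction

section LiminfExtension

variable {n : ℕ} {Ω E : Set (En n)} {u : En n → ℝ} {x : En n}

lemma liminfExtension_of_mem (hx : x ∈ E) :
    liminfExtension Ω E u x = liminf (fun y => (u y : EReal)) (𝓝[Ω \ E] x) :=
  if_pos hx

lemma liminfExtension_of_notMem (hx : x ∉ E) : liminfExtension Ω E u x = u x :=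
  if_neg hx

lemma eventually_lt_of_lt_liminfExtension (hu : LowerSemicontinuousOn u (Ω \ E)) (hx : x ∈ Ω)
    {c : EReal} (hc : c < liminfExtension Ω E u x) : ∀ᶠ y in 𝓝[Ω \ E] x, c < u y := by
  by_cases hxE : x ∈ E
  · rw [liminfExtension_of_mem hxE] at hc
    exact eventually_lt_of_lt_liminf hc
  · rw [liminfExtension_of_notMem hxE] at hc
    obtain ⟨q, hcq, hqu⟩ := EReal.lt_iff_exists_real_btwn.1 hc
    exact (hu x ⟨hx, hxE⟩ q (EReal.coe_lt_coe_iff.1 hqu)).mono fun y hy =>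
      hcq.trans (EReal.coe_lt_coe_iff.2 hy)

lemma le_liminfExtension_of_eventually_le (hx : x ∈ Ω) {c : EReal}
    (hc : ∀ᶠ y in 𝓝[Ω \ E] x, c ≤ u y) : c ≤ liminfExtension Ω E u x := by
  by_cases hxE : x ∈ E
  · rw [liminfExtension_of_mem hxE]
    exact le_liminf_of_le (by isBoundedDefault) hc
  · rw [liminfExtension_of_notMem hxE]
    exact hc.self_of_nhdsWithin ⟨hx, hxE⟩

lemma lowerSemicontinuousOn_liminfExtension (hu : LowerSemicontinuousOn u (Ω \ E)) :
    LowerSemicontinuousOn (liminfExtension Ω E u) Ω := by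
  intro x hx c hc
  obtain ⟨b, hcb, hb⟩ := exists_between hc
  have hnear := eventually_eventually_nhds.2
    (eventually_nhdsWithin_iff.1 (eventually_lt_of_lt_liminfExtension hu hx hb))
  filter_upwards [self_mem_nhdsWithin, eventually_nhdsWithin_of_eventually_nhds hnear]
    with z hzΩ hz
  exact hcb.trans_le (le_liminfExtension_of_eventually_le hzΩ
    (eventually_nhdsWithin_iff.2 (hz.mono fun y hy hyΩ => (hy hyΩ).le)))

lemma liminfExtension_ne_bot (hx : x ∈ E) (hu : IsBoundedUnder (· ≥ ·) (𝓝[Ω \ E] x) u) :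
    liminfExtension Ω E u x ≠ ⊥ := by
  obtain ⟨b, hb⟩ := hu
  rw [liminfExtension_of_mem hx]
  refine ((EReal.bot_lt_coe b).trans_le (le_liminf_of_le (by isBoundedDefault) ?_)).ne'
  exact (eventually_map.1 hb).mono fun y hy => EReal.coe_le_coe_iff.2 hy

lemma frequently_lt_of_liminfExtension_eq (hx : x ∈ E) {a : ℝ}
    (ha : liminfExtension Ω E u x = a) : ∀ c > a, ∃ᶠ y in 𝓝[Ω \ E] x, u y < c := by
  intro c hc
  rw [liminfExtension_of_mem hx] at ha
  exact (frequently_lt_of_liminf_lt (by isBoundedDefault)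
    (ha.trans_lt (EReal.coe_lt_coe_iff.2 hc))).mono fun y hy => EReal.coe_lt_coe_iff.1 hy

end LiminfExtension

theorem extension_is_lowerconical_general {n k : ℕ} (hk : k + 2 ≤ n) {Ω E : Set (En n)}
    (hΩ : IsOpen Ω) (hEΩ : E ⊆ Ω) (hE : ∀ p ∈ E, IsC3SubmanifoldAt (n - k) E p) {u : En n → ℝ}
    (hu : LowerSemicontinuousOn u (Ω \ E))
    (hubd : ∀ p ∈ E, IsBoundedUnder (· ≥ ·) (𝓝[Ω \ E] p) u)
    (hvisc : IsViscositySupersolution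
      (fun _ _ _ M => sumSmallestEigs (k + 2) M) (fun _ => 0) (Ω \ E) u) :
    LowerSemicontinuousOn (liminfExtension Ω E u) Ω ∧
      ERealLowerConicalOn Ω (liminfExtension Ω E u) E := by
  refine ⟨lowerSemicontinuousOn_liminfExtension hu, fun η hη p hp ε hε => ?_⟩
  cases hv : liminfExtension Ω E u p with
  | bot => exact absurd hv (liminfExtension_ne_bot hp (hubd p hp))
  | top =>
    obtain ⟨x, hxE, hxΩ⟩ := (((hE p hp).frequently_notMem (by lia)).and_eventually
      (hΩ.eventually_mem (hEΩ hp))).exists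
    refine ⟨x, hxΩ, ?_⟩
    rw [liminfExtension_of_notMem hxE]
    simp
  | coe a =>
    obtain ⟨x, hx, hlt⟩ := exists_add_lt_add_mul_infDist hk hΩ hp (hEΩ hp) (hE p hp) hu hvisc
      (frequently_lt_of_liminfExtension_eq hp hv) (contDiffOn_infty.1 hη 2) hε
    refine ⟨x, hx.1, ?_⟩
    rw [liminfExtension_of_notMem hx.2]
    norm_cast
    linarith

/-- **Theorem 1.4.** If `u ∈ LSC(Ω \ E)` is bounded below and satisfies
`λ₁(∇²u) + ⋯ + λ_{k+2}(∇²u) ≤ 0` in `Ω \ E` in the viscosity sense, where `E ⊂ Ω` is a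
smooth closed `k`-dimensional submanifold with `0 ≤ k ≤ n-2`, then the extension of `u`
to `E` by `u(x) := liminf_{y → x, y ∈ Ω \ E} u(y)` is lower semicontinuous on `Ω` and
lowerconical on `E`. -/
theorem extension_is_lowerconical
    {n : ℕ} (hn : 2 ≤ n) (Ω : Set (En n))
    (hΩopen : IsOpen Ω) (hΩconn : IsConnected Ω) (hΩbdd : Bornology.IsBounded Ω)
    (k : ℕ) (hk : k ≤ n - 2)
    (E : Set (En n)) (hEΩ : E ⊆ Ω) (hE : IsSmoothClosedSubmanifold k E)
    (u : En n → ℝ) (hu : LowerSemicontinuousOn u (Ω \ E))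
    (hubd : BddBelow (u '' (Ω \ E)))
    (hvisc : IsViscositySupersolution
      (fun _ _ _ M => sumSmallestEigs (k + 2) M) (fun _ => 0) (Ω \ E) u) :
    LowerSemicontinuousOn (liminfExtension Ω E u) Ω ∧
      ERealLowerConicalOn Ω (liminfExtension Ω E u) E := by
  exact extension_is_lowerconical_general (by lia) hΩopen hEΩ
    (fun _ => isC3SubmanifoldAt_of_isSmoothClosedSubmanifold hE) hu
    (fun _ _ => hubd.isBoundedUnder self_mem_nhdsWithin) hvisc
end
end
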